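/- arXiv:2105.05848 — 6 statements merged into one kernel-verified Lean document; each statement's English description precedes it below -/
import Mathlib

section
/- Let H be a real Hilbert space, α ∈ (0,1), β := 1−α, λ ≥ 0, τ > 0, and T > 0. Let e : [0,T] → H be continuous with e(0) = 0, differentiable on (0,T), such that s ↦ (t−s)^{−α}‖e′(s)‖ is integrable on (0,t) for every t ∈ (0,T], and such that t ↦ ‖e(t)‖ is Lipschitz continuous on [ε, T] for every ε ∈ (0,T). Let r : (0,T] → ℝ be nonnegative and continuous, and suppose that for every t ∈ (0,T]: (1/Γ(1−α)) ⟨∫_0^t (t−s)^{−α} e′(s) ds, e(t)⟩ + λ ‖e(t)‖² ≤ r(t) ‖e(t)‖. Define ρ(s) := s^{−β}(1 − (max{1−s, 0})^β), 𝓔₁(s) := max{τ, s}^{α−1}, and 𝓡₁(s) := (1/Γ(1−α)) s^{−1} ρ(τ/s) + λ 𝓔₁(s) for s > 0. Then for every t ∈ (0,T], provided the supremum is finite: ‖e(t)‖ ≤ max{τ, t}^{α−1} · sup_{0 < s ≤ t} [ r(s) / 𝓡₁(s) ]. -/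
open MeasureTheory Real
open scoped RealInnerProductSpace

open Set Filter Topology in
lemma caputo_max_key {α t : ℝ} (hα : 0 < α) (ht : 0 < t) (g g' : ℝ → ℝ)
    (hc : ContinuousOn g (Icc 0 t))
    (hd : ∀ s ∈ Ioo 0 t, HasDerivWithinAt g (g' s) (Ioi s) s)
    (hi : IntegrableOn (fun s => (t - s) ^ (-α) * g' s) (Ioo 0 t))
    (hmax : ∀ s ∈ Icc 0 t, g s ≤ g t) :
    t ^ (-α) * (g t - g 0) ≤ ∫ s in Ioo 0 t, (t - s) ^ (-α) * g' s := by
  have hi2 : IntegrableOn (fun s => (t - s) ^ (-α) * g' s) (Icc 0 t) :=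
    (integrableOn_Icc_iff_integrableOn_Ioo).2 hi
  have hi3 : IntegrableOn (fun s => |(t - s) ^ (-α) * g' s|) (Icc 0 t) := hi2.abs
  have step : ∀ x ∈ Ioo 0 t, t ^ (-α) * (g t - g 0) ≤
      (∫ s in (0:ℝ)..x, (t - s) ^ (-α) * g' s) + ∫ s in x..t, |(t - s) ^ (-α) * g' s| := by
    intro x hx
    have h1 := intervalIntegral.sub_le_integral_of_hasDeriv_right_of_le
      (g := fun s => -((t - s) ^ (-α) * (g t - g s)))
      (g' := fun s => -((-1 * (-α) * (t - s) ^ (-α - 1)) * (g t - g s) + (t - s) ^ (-α) * (- g' s)))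
      (φ := fun s => (t - s) ^ (-α) * g' s) (a := 0) (b := x) hx.1.le ?_ ?_ ?_ ?_
    · have h2 := intervalIntegral.sub_le_integral_of_hasDeriv_right_of_le
        (g := g) (g' := g') (φ := fun s => (t - x) ^ α * |(t - s) ^ (-α) * g' s|) (a := x) (b := t)
        hx.2.le ?_ ?_ ?_ ?_
      · rw [intervalIntegral.integral_const_mul] at h2
        have hp : 0 < (t - x) ^ (-α) := Real.rpow_pos_of_pos (by linarith [hx.2]) _
        have h3 := mul_le_mul_of_nonneg_left h2 hp.le
        rw [← mul_assoc, ← Real.rpow_add (by linarith [hx.2])] at h3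
        simp only [neg_add_cancel, Real.rpow_zero, one_mul] at h3
        simp only [sub_zero] at h1
        linarith
      · exact hc.mono (Icc_subset_Icc hx.1.le le_rfl)
      · intro s hs; exact hd s ⟨hx.1.trans hs.1, hs.2⟩
      · exact (hi3.mono_set (Icc_subset_Icc hx.1.le le_rfl)).const_mul _
      · intro s hs
        have hts : 0 < t - s := by linarith [hs.2]
        rw [abs_mul, abs_of_pos (Real.rpow_pos_of_pos hts _), ← mul_assoc]
        have : 1 ≤ (t - x) ^ α * (t - s) ^ (-α) := by
          rw [Real.rpow_neg hts.le, ← div_eq_mul_inv, one_le_div (Real.rpow_pos_of_pos hts _)]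
          exact Real.rpow_le_rpow hts.le (by linarith [hs.1]) hα.le
        calc g' s ≤ 1 * |g' s| := by rw [one_mul]; exact le_abs_self _
          _ ≤ _ := mul_le_mul_of_nonneg_right this (abs_nonneg _)
    · apply ContinuousOn.neg
      apply ContinuousOn.mul
      · apply ContinuousOn.rpow_const (by fun_prop)
        intro s hs; left; have := hs.2; have := hx.2; linarith
      · exact continuousOn_const.sub (hc.mono (Icc_subset_Icc le_rfl hx.2.le))
    · intro s hs
      have hts : t - s ≠ 0 := by have := hs.2; have := hx.2; linarith
      have hA : HasDerivAt (fun s => (t - s) ^ (-α)) (-1 * (-α) * (t - s) ^ (-α - 1)) s :=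
        ((hasDerivAt_id s).const_sub t).rpow_const (Or.inl hts)
      exact (hA.hasDerivWithinAt.mul ((hd s ⟨hs.1, hs.2.trans hx.2⟩).const_sub (g t))).neg
    · exact hi2.mono_set (Icc_subset_Icc le_rfl hx.2.le)
    · intro s hs
      have hts : 0 < t - s := by have := hs.2; have := hx.2; linarith
      have h1 : 0 ≤ α * (t - s) ^ (-α - 1) * (g t - g s) :=
        mul_nonneg (mul_nonneg hα.le (Real.rpow_nonneg hts.le _))
          (sub_nonneg.2 (hmax s ⟨hs.1.le, (hs.2.trans hx.2).le⟩))
      show -((-1 * (-α) * (t - s) ^ (-α - 1)) * (g t - g s) + (t - s) ^ (-α) * (- g' s)) ≤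
        (t - s) ^ (-α) * g' s
      linarith
  have hu : uIcc 0 t = Icc 0 t := uIcc_of_le ht.le
  have c1 := intervalIntegral.continuousOn_primitive_interval (μ := volume) (a := 0) (b := t)
    (f := fun s => (t - s) ^ (-α) * g' s) (by rwa [hu])
  have c2 := intervalIntegral.continuousOn_primitive_interval_left (μ := volume) (a := 0) (b := t)
    (f := fun s => |(t - s) ^ (-α) * g' s|) (by rwa [hu])
  have c3 := (c1.add c2) t right_mem_uIcc
  rw [hu] at c3
  have c4 := c3.mono_left (nhdsWithin_mono t (Ioo_subset_Icc_self (a := 0) (b := t)))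
  have : (𝓝[Ioo 0 t] t).NeBot := by
    rw [nhdsWithin_Ioo_eq_nhdsLT ht]; infer_instance
  have := ge_of_tendsto c4 (eventually_mem_nhdsWithin.mono step)
  simp only [intervalIntegral.integral_same, add_zero, Pi.add_apply] at this
  rwa [intervalIntegral.integral_of_le ht.le, integral_Ioc_eq_integral_Ioo] at this

open Set Filter Topology in
lemma caputo_barrier {α τ t : ℝ} (hα : α ∈ Ioo (0:ℝ) 1) (hτ : 0 < τ) (ht : 0 < t) :
    ∃ D : ℝ → ℝ,
      (∀ s ∈ Ioo 0 t, HasDerivWithinAt (fun s => max τ s ^ (α - 1)) (D s) (Ioi s) s) ∧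
      IntegrableOn (fun s => (t - s) ^ (-α) * D s) (Ioo 0 t) ∧
      ∫ s in Ioo 0 t, (t - s) ^ (-α) * D s =
        - (τ ^ (α - 1) * t ^ (-α) * (max (1 - τ / t) 0) ^ (1 - α)) := by
  rcases le_or_gt t τ with h | h
  · refine ⟨fun _ => 0, ?_, by simp, ?_⟩
    · intro s hs
      apply HasDerivAt.hasDerivWithinAt
      apply (hasDerivAt_const s (τ ^ (α - 1))).congr_of_eventuallyEq
      filter_upwards [Iio_mem_nhds (hs.2.trans_le h)] with y hy
      rw [max_eq_left (le_of_lt hy)]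
    · have : max (1 - τ / t) 0 = 0 := max_eq_right (by
        have := (one_le_div ht).2 h; linarith)
      rw [this, Real.zero_rpow (by linarith [hα.2])]; simp
  · set d : ℝ → ℝ := fun s => (α - 1) * s ^ (α - 1 - 1) with hd
    have hP : ∀ s ∈ Ioo τ t, HasDerivAt (fun s => -(s ^ (α - 1) * (t - s) ^ (1 - α) / t))
        (-((t - s) ^ (-α) * d s)) s := by
      intro s hs
      have hs0 : 0 < s := hτ.trans hs.1
      have hts : 0 < t - s := by linarith [hs.2]
      have h1 : HasDerivAt (fun s => s ^ (α - 1)) ((α - 1) * s ^ (α - 1 - 1)) s :=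
        Real.hasDerivAt_rpow_const (Or.inl hs0.ne')
      have h2 : HasDerivAt (fun s => (t - s) ^ (1 - α)) (-1 * (1 - α) * (t - s) ^ (1 - α - 1)) s :=
        ((hasDerivAt_id s).const_sub t).rpow_const (Or.inl hts.ne')
      refine (((h1.mul h2).div_const t).neg).congr_deriv ?_
      have e1 : s ^ (α - 1) = s ^ (α - 1 - 1) * s := by
        rw [← Real.rpow_add_one hs0.ne']; ring_nf
      have e2 : (t - s) ^ (1 - α) = (t - s) ^ (-α) * (t - s) := by
        rw [← Real.rpow_add_one hts.ne']; ring_nf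
      have e3 : (t - s) ^ (1 - α - 1) = (t - s) ^ (-α) := by ring_nf
      rw [e1, e2, e3, hd]
      field_simp
      ring
    have hPc : ContinuousOn (fun s => -(s ^ (α - 1) * (t - s) ^ (1 - α) / t)) (Icc τ t) := by
      apply ContinuousOn.neg
      apply ContinuousOn.div_const
      apply ContinuousOn.mul
      · apply ContinuousOn.rpow_const (by fun_prop)
        intro s hs; left; have := hs.1; simp; linarith
      · apply ContinuousOn.rpow_const (by fun_prop)
        intro s hs; right; linarith [hα.2]
    have hint : IntegrableOn (fun s => -((t - s) ^ (-α) * d s)) (Ioc τ t) := by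
      apply intervalIntegral.integrableOn_deriv_of_nonneg hPc hP
      intro s hs
      have a1 : 0 ≤ (t - s) ^ (-α) := Real.rpow_nonneg (by linarith [hs.2]) _
      have a2 : 0 ≤ s ^ (α - 1 - 1) := Real.rpow_nonneg (by linarith [hs.1]) _
      have : -((t - s) ^ (-α) * d s) = (t - s) ^ (-α) * ((1 - α) * s ^ (α - 1 - 1)) := by
        rw [hd]; ring
      rw [this]
      exact mul_nonneg a1 (mul_nonneg (by linarith [hα.2]) a2)
    have hval := intervalIntegral.integral_eq_sub_of_hasDerivAt_of_le h.le hPc hP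
      ((intervalIntegrable_iff_integrableOn_Ioc_of_le h.le).2 hint)
    have hint2 : IntegrableOn (fun s => (t - s) ^ (-α) * d s) (Ioc τ t) := by
      simpa using hint.neg
    have hset : Ioo 0 t ∩ Ici τ = Ico τ t := by
      ext s; simp only [mem_inter_iff, mem_Ioo, mem_Ici, mem_Ico]
      constructor
      · rintro ⟨⟨_, b⟩, c⟩; exact ⟨c, b⟩
      · rintro ⟨a, b⟩; exact ⟨⟨by linarith, b⟩, a⟩
    have hfun : (fun s => (t - s) ^ (-α) * (Ici τ).indicator d s) =
        (Ici τ).indicator (fun s => (t - s) ^ (-α) * d s) := by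
      ext s; by_cases hs : s ∈ Ici τ <;> simp [hs]
    have hint3 : IntegrableOn (fun s => (t - s) ^ (-α) * d s) (Ico τ t) := by
      rw [integrableOn_Ico_iff_integrableOn_Ioo, ← integrableOn_Ioc_iff_integrableOn_Ioo]
      exact hint2
    refine ⟨(Ici τ).indicator d, ?_, ?_, ?_⟩
    · intro s hs
      rcases lt_or_ge s τ with h1 | h1
      · rw [indicator_of_notMem (by simpa using h1)]
        apply HasDerivAt.hasDerivWithinAt
        apply (hasDerivAt_const s (τ ^ (α - 1))).congr_of_eventuallyEq
        filter_upwards [Iio_mem_nhds h1] with y hy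
        rw [max_eq_left (le_of_lt hy)]
      · rw [indicator_of_mem (by simpa using h1)]
        have h2 : HasDerivAt (fun s => s ^ (α - 1)) ((α - 1) * s ^ (α - 1 - 1)) s :=
          Real.hasDerivAt_rpow_const (Or.inl hs.1.ne')
        apply h2.hasDerivWithinAt.congr
        · intro y hy
          rw [max_eq_right (h1.trans (le_of_lt hy))]
        · rw [max_eq_right h1]
    · rw [hfun, integrableOn_indicator_iff measurableSet_Ici, inter_comm, hset]
      exact hint3
    · rw [hfun, setIntegral_indicator measurableSet_Ici, hset, integral_Ico_eq_integral_Ioo,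
        ← integral_Ioc_eq_integral_Ioo, ← intervalIntegral.integral_of_le h.le]
      rw [intervalIntegral.integral_neg] at hval
      have hb : (1 - α) ≠ 0 := by linarith [hα.2]
      simp only [sub_self, Real.zero_rpow hb] at hval
      have hm : max (1 - τ / t) 0 = (t - τ) / t := by
        rw [max_eq_left]
        · field_simp
        · have := (div_le_one ht).2 h.le; linarith
      rw [hm, Real.div_rpow (by linarith) ht.le]
      have e2 : t ^ (1 - α) = t ^ (-α) * t := by
        rw [← Real.rpow_add_one ht.ne']; ring_nf
      have hp : t ^ (-α) ≠ 0 := (Real.rpow_pos_of_pos ht _).ne'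
      rw [e2]
      have : τ ^ (α - 1) * t ^ (-α) * ((t - τ) ^ (1 - α) / (t ^ (-α) * t)) =
        τ ^ (α - 1) * (t - τ) ^ (1 - α) / t := by field_simp
      rw [this]
      simp only [mul_zero, zero_div, neg_zero, zero_sub, neg_neg] at hval
      linarith

/-- Second bound of Corollary 2.2: with the residual barrier
`𝓡₁(s) = (1/Γ(1-α)) s⁻¹ ρ(τ/s) + λ 𝓔₁(s)` built from the profile
`ρ(s) = s^(-β)(1 - ((1-s)⁺)^β)`, `β = 1-α`, and the error barrier
`𝓔₁(s) = max{τ, s}^(α-1)`, the error satisfies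
`‖e(t)‖ ≤ 𝓔₁(t) · sup_{0 < s ≤ t} r(s)/𝓡₁(s)`, provided the supremum is finite. -/
theorem error_bound_R1
    {H : Type*} [NormedAddCommGroup H] [InnerProductSpace ℝ H] [CompleteSpace H]
    (α β lam τ T : ℝ) (hα : α ∈ Set.Ioo (0 : ℝ) 1) (hβ : β = 1 - α)
    (hlam : 0 ≤ lam) (hτ : 0 < τ) (hT : 0 < T)
    (e e' : ℝ → H) (r : ℝ → ℝ)
    (he_cont : ContinuousOn e (Set.Icc 0 T))
    (he0 : e 0 = 0)
    (hderiv : ∀ s ∈ Set.Ioo 0 T, HasDerivAt e (e' s) s)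
    (hint : ∀ t ∈ Set.Ioc 0 T, IntegrableOn (fun s => (t - s) ^ (-α) * ‖e' s‖) (Set.Ioo 0 t))
    (hlip : ∀ ε ∈ Set.Ioo 0 T, ∃ K : NNReal, LipschitzOnWith K (fun s => ‖e s‖) (Set.Icc ε T))
    (hr_nonneg : ∀ t ∈ Set.Ioc 0 T, 0 ≤ r t)
    (hr_cont : ContinuousOn r (Set.Ioc 0 T))
    (hres : ∀ t ∈ Set.Ioc 0 T,
      (1 / Real.Gamma (1 - α)) * ⟪(∫ s in Set.Ioo 0 t, (t - s) ^ (-α) • e' s), e t⟫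
        + lam * ‖e t‖ ^ 2 ≤ r t * ‖e t‖)
    (ρ E₁ R₁ : ℝ → ℝ)
    (hρ : ∀ s : ℝ, 0 < s → ρ s = s ^ (-β) * (1 - max (1 - s) 0 ^ β))
    (hE₁ : ∀ s : ℝ, 0 < s → E₁ s = max τ s ^ (α - 1))
    (hR₁ : ∀ s : ℝ, 0 < s → R₁ s = (1 / Real.Gamma (1 - α)) * s⁻¹ * ρ (τ / s) + lam * E₁ s) :
    ∀ t ∈ Set.Ioc 0 T,
      BddAbove ((fun s => r s / R₁ s) '' Set.Ioc 0 t) →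
      ‖e t‖ ≤ max τ t ^ (α - 1) * sSup ((fun s => r s / R₁ s) '' Set.Ioc 0 t) := by
  intro t ht hbdd
  set M := sSup ((fun s => r s / R₁ s) '' Set.Ioc 0 t) with hM
  have hG : 0 < Real.Gamma (1 - α) := Real.Gamma_pos_of_pos (by linarith [hα.2])
  subst hβ
  -- explicit form of the residual barrier
  have hRform : ∀ s : ℝ, 0 < s → R₁ s = (1 / Real.Gamma (1 - α)) *
      (τ ^ (α - 1) * s ^ (-α) * (1 - max (1 - τ / s) 0 ^ (1 - α)))
        + lam * max τ s ^ (α - 1) := by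
    intro s hs
    rw [hR₁ s hs, hρ _ (div_pos hτ hs), hE₁ s hs, Real.div_rpow hτ.le hs.le]
    have e1 : τ ^ (-(1 - α)) = τ ^ (α - 1) := by ring_nf
    have e2 : s⁻¹ / s ^ (-(1 - α)) = s ^ (-α) := by
      rw [← Real.rpow_neg_one, ← Real.rpow_sub hs]; ring_nf
    rw [e1, ← e2]; ring
  have hRpos : ∀ s : ℝ, 0 < s → 0 < R₁ s := by
    intro s hs
    rw [hRform s hs]
    have h1 : max (1 - τ / s) 0 ^ (1 - α) < 1 := by
      apply Real.rpow_lt_one (le_max_right _ _) _ (by linarith [hα.2])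
      have := div_pos hτ hs
      exact max_lt (by linarith) one_pos
    have h2 := Real.rpow_pos_of_pos hτ (α - 1)
    have h3 := Real.rpow_pos_of_pos hs (-α)
    have h4 : 0 ≤ max τ s ^ (α - 1) := Real.rpow_nonneg (le_max_of_le_left hτ.le) _
    have h5 : 0 < 1 - max (1 - τ / s) 0 ^ (1 - α) := by linarith
    have h6 : 0 ≤ lam * max τ s ^ (α - 1) := mul_nonneg hlam h4
    have h7 : 0 < (1 / Real.Gamma (1 - α)) *
      (τ ^ (α - 1) * s ^ (-α) * (1 - max (1 - τ / s) 0 ^ (1 - α))) := by positivity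
    linarith
  have hrM : ∀ s ∈ Set.Ioc 0 t, r s ≤ M * R₁ s := by
    intro s hs
    rw [← div_le_iff₀ (hRpos s hs.1)]
    exact le_csSup hbdd ⟨s, hs, rfl⟩
  have hM0 : 0 ≤ M :=
    (div_nonneg (hr_nonneg t ht) (hRpos t ht.1).le).trans
      (le_csSup hbdd ⟨t, ⟨ht.1, le_rfl⟩, rfl⟩)
  by_contra hcon
  push Not at hcon
  have hEc : Continuous (fun s : ℝ => max τ s ^ (α - 1)) := by
    apply Continuous.rpow_const (by fun_prop)
    intro s; left; exact (lt_of_lt_of_le hτ (le_max_left _ _)).ne'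
  have hEpos : ∀ s : ℝ, 0 < max τ s ^ (α - 1) := fun s =>
    Real.rpow_pos_of_pos (lt_of_lt_of_le hτ (le_max_left _ _)) _
  obtain ⟨t₀, ht₀, hmax⟩ := isCompact_Icc.exists_isMaxOn (s := Set.Icc 0 t)
    ⟨t, ht.1.le, le_rfl⟩ (f := fun s => ‖e s‖ - M * max τ s ^ (α - 1))
    (((he_cont.mono (Set.Icc_subset_Icc le_rfl ht.2)).norm).sub
      (hEc.const_mul M |>.continuousOn))
  have hmax' : ∀ s ∈ Set.Icc 0 t, ‖e s‖ - M * max τ s ^ (α - 1) ≤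
    ‖e t₀‖ - M * max τ t₀ ^ (α - 1) := fun s hs => hmax hs
  have hw : 0 < ‖e t₀‖ - M * max τ t₀ ^ (α - 1) := by
    have := hmax' t ⟨ht.1.le, le_rfl⟩
    linarith
  have hme : 0 ≤ M * max τ t₀ ^ (α - 1) := mul_nonneg hM0 (hEpos t₀).le
  have hn0 : 0 < ‖e t₀‖ := by linarith
  have ht₀0 : 0 < t₀ := by
    rcases ht₀.1.eq_or_lt with h | h
    · rw [← h, he0] at hn0; simp at hn0
    · exact h
  have ht₀T : t₀ ≤ T := ht₀.2.trans ht.2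
  -- integrability of the vector-valued integrand
  have hmeas : AEStronglyMeasurable (fun s => (t₀ - s) ^ (-α) • e' s)
      (volume.restrict (Set.Ioo 0 t₀)) := by
    apply AEStronglyMeasurable.smul
    · exact (Measurable.pow_const (by fun_prop) _).aestronglyMeasurable
    · refine (aestronglyMeasurable_deriv e _).congr ?_
      filter_upwards [ae_restrict_mem measurableSet_Ioo] with s hs
      exact (hderiv s ⟨hs.1, hs.2.trans_le ht₀T⟩).deriv
  have hI : IntegrableOn (fun s => (t₀ - s) ^ (-α) • e' s) (Set.Ioo 0 t₀) := by
    refine Integrable.mono' (hint t₀ ⟨ht₀0, ht₀T⟩) hmeas ?_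
    filter_upwards [ae_restrict_mem measurableSet_Ioo] with s hs
    rw [norm_smul, Real.norm_of_nonneg (Real.rpow_nonneg (by linarith [hs.2]) _)]
  set n : H := ‖e t₀‖⁻¹ • e t₀ with hn
  have hnn : ‖n‖ = 1 := by
    rw [hn, norm_smul, norm_inv, norm_norm, inv_mul_cancel₀ hn0.ne']
  have hfn : ⟪n, e t₀⟫ = ‖e t₀‖ := by
    rw [hn, real_inner_smul_left, real_inner_self_eq_norm_sq]
    field_simp
  have hfle : ∀ s, ⟪n, e s⟫ ≤ ‖e s‖ := by
    intro s
    have := real_inner_le_norm n (e s)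
    rwa [hnn, one_mul] at this
  obtain ⟨D, hD1, hD2, hD3⟩ := caputo_barrier hα hτ ht₀0
  have hIn : IntegrableOn (fun s => (t₀ - s) ^ (-α) * ⟪n, e' s⟫) (Set.Ioo 0 t₀) := by
    have := hI.const_inner (𝕜 := ℝ) n
    simp only [real_inner_smul_right] at this
    exact this
  have hIval : ∫ s in Set.Ioo 0 t₀, (t₀ - s) ^ (-α) * ⟪n, e' s⟫ =
      ⟪n, ∫ s in Set.Ioo 0 t₀, (t₀ - s) ^ (-α) • e' s⟫ := by
    rw [← integral_inner hI n]
    simp only [real_inner_smul_right]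
  have hkey := caputo_max_key hα.1 ht₀0 (fun s => ⟪n, e s⟫ - M * max τ s ^ (α - 1))
    (fun s => ⟪n, e' s⟫ - M * D s) ?_ ?_ ?_ ?_
  · have hsplit : ∫ s in Set.Ioo 0 t₀, (t₀ - s) ^ (-α) * (⟪n, e' s⟫ - M * D s) =
        ⟪n, ∫ s in Set.Ioo 0 t₀, (t₀ - s) ^ (-α) • e' s⟫ -
        M * ∫ s in Set.Ioo 0 t₀, (t₀ - s) ^ (-α) * D s := by
      rw [← hIval, ← integral_const_mul, ← integral_sub hIn (hD2.const_mul M)]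
      congr 1; ext s; ring
    rw [hsplit, hD3] at hkey
    simp only [he0, inner_zero_right, max_eq_left hτ.le, hfn] at hkey
    have hr0 := hres t₀ ⟨ht₀0, ht₀T⟩
    set V := ∫ s in Set.Ioo 0 t₀, (t₀ - s) ^ (-α) • e' s with hV
    have hVn : ⟪V, e t₀⟫ = ‖e t₀‖ * ⟪n, V⟫ := by
      rw [hn, real_inner_smul_left, real_inner_comm, mul_inv_cancel_left₀ hn0.ne']
    rw [hVn] at hr0
    have hr1 : (1 / Real.Gamma (1 - α)) * ⟪n, V⟫ + lam * ‖e t₀‖ ≤ r t₀ := by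
      refine le_of_mul_le_mul_right ?_ hn0
      linarith
    have hr2 := hrM t₀ ⟨ht₀0, ht₀.2⟩
    rw [hRform t₀ ht₀0] at hr2
    have hpt := Real.rpow_pos_of_pos ht₀0 (-α)
    have hprod := mul_pos hpt hw
    have hlt : M * (τ ^ (α - 1) * t₀ ^ (-α) * (1 - max (1 - τ / t₀) 0 ^ (1 - α))) < ⟪n, V⟫ := by
      linarith
    have hlt2 := mul_lt_mul_of_pos_left hlt (one_div_pos.2 hG)
    have hlt3 : lam * (M * max τ t₀ ^ (α - 1)) ≤ lam * ‖e t₀‖ :=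
      mul_le_mul_of_nonneg_left (by linarith) hlam
    linarith
  · exact (continuousOn_const.inner (𝕜 := ℝ) (he_cont.mono (Set.Icc_subset_Icc le_rfl ht₀T))).sub
      (hEc.const_mul M |>.continuousOn)
  · intro s hs
    have h1 : HasDerivAt (fun s => ⟪n, e s⟫) (⟪n, e' s⟫) s := by
      have := (hasDerivAt_const s n).inner ℝ (hderiv s ⟨hs.1, hs.2.trans_le ht₀T⟩)
      simpa using this
    exact h1.hasDerivWithinAt.sub ((hD1 s hs).const_mul M)
  · refine (hIn.sub (hD2.const_mul M)).congr ?_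
    refine Filter.Eventually.of_forall fun s => ?_
    simp only [Pi.sub_apply]; ring
  · intro s hs
    have h1 := hmax' s ⟨hs.1, hs.2.trans ht₀.2⟩
    have h2 := hfle s
    show ⟪n, e s⟫ - M * max τ s ^ (α - 1) ≤ ⟪n, e t₀⟫ - M * max τ t₀ ^ (α - 1)
    rw [hfn]; linarith
end

section
/- Let H be a real Hilbert space, α ∈ (0,1), λ ∈ ℝ, T > 0, and d ∈ H. Let ē : [0,T] → H be continuous with ē(0) = d, differentiable on (0,T), such that s ↦ (t−s)^{−α}‖ē′(s)‖ is integrable on (0,t) for every t ∈ (0,T], and such that t ↦ ‖ē(t)‖ is Lipschitz continuous on [ε, T] for every ε ∈ (0,T). Define e(0) := 0 and e(t) := ē(t) for t ∈ (0,T]. Let r : (0,T] → ℝ be nonnegative and continuous, with s ↦ (t−s)^{α−1} E_{α,α}(−λ(t−s)^α) r(s) integrable on (0,t) for every t ∈ (0,T], and suppose that for every t ∈ (0,T]: (1/Γ(1−α)) ⟨ t^{−α} d + ∫_0^t (t−s)^{−α} ē′(s) ds, e(t) ⟩ + λ ‖e(t)‖² ≤ r(t) ‖e(t)‖. Then for every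 t ∈ (0,T]: ‖e(t)‖ ≤ ∫_0^t (t−s)^{α−1} E_{α,α}(−λ(t−s)^α) r(s) ds. -/
open MeasureTheory Real
open scoped RealInnerProductSpace

/-- The generalized Mittag-Leffler function `E_{a,b}(z) = ∑_{k≥0} z^k / Γ(ak + b)`. -/
noncomputable def mittagLeffler (a b z : ℝ) : ℝ := ∑' k : ℕ, z ^ k / Real.Gamma (a * k + b)

lemma ml_beta_conv {a b t : ℝ} (ha : 0 < a) (hb : 0 < b) (ht : 0 < t) :
    ∫ s in Set.Ioo 0 t, (t - s) ^ (a - 1) * s ^ (b - 1)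
      = t ^ (a + b - 1) * (Real.Gamma a * Real.Gamma b / Real.Gamma (a + b)) := by
  have h := Complex.betaIntegral_scaled (b : ℂ) (a : ℂ) ht
  rw [Complex.betaIntegral_eq_Gamma_mul_div _ _ (by simpa) (by simpa)] at h
  rw [intervalIntegral.integral_of_le ht.le, integral_Ioc_eq_integral_Ioo] at h
  have h2 : ∫ x in Set.Ioo 0 t, (x : ℂ) ^ ((b : ℂ) - 1) * ((t : ℂ) - x) ^ ((a : ℂ) - 1)
      = ∫ x in Set.Ioo 0 t, (((t - x) ^ (a - 1) * x ^ (b - 1) : ℝ) : ℂ) := by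
    refine setIntegral_congr_fun measurableSet_Ioo fun x hx => ?_
    rw [Complex.ofReal_mul, Complex.ofReal_cpow (by linarith [hx.2]), Complex.ofReal_cpow hx.1.le]
    push_cast
    ring
  rw [h2, integral_complex_ofReal] at h
  apply Complex.ofReal_injective
  rw [h]
  rw [Complex.ofReal_mul, Complex.ofReal_cpow ht.le]
  push_cast
  rw [← Complex.Gamma_ofReal, ← Complex.Gamma_ofReal, ← Complex.Gamma_ofReal]
  push_cast
  rw [add_comm (b : ℂ) a, mul_comm (Complex.Gamma b)]

lemma ml_beta_int {a b t : ℝ} (ha : 0 < a) (hb : 0 < b) (ht : 0 < t) :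
    IntegrableOn (fun s => (t - s) ^ (a - 1) * s ^ (b - 1)) (Set.Ioo 0 t) := by
  by_contra h
  have h1 := ml_beta_conv ha hb ht
  rw [integral_undef h] at h1
  have := Real.Gamma_pos_of_pos ha
  have := Real.Gamma_pos_of_pos hb
  have := Real.Gamma_pos_of_pos (add_pos ha hb)
  have : 0 < t ^ (a + b - 1) * (Real.Gamma a * Real.Gamma b / Real.Gamma (a + b)) := by positivity
  linarith

lemma ml_gamma_ratio {α x : ℝ} (h0 : 0 < α) (h1 : α < 1) (hx : 0 < x) :
    Real.Gamma x / Real.Gamma (x + α) ≤ (x + α) ^ (1 - α) / x := by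
  have h := Real.Gamma_mul_add_mul_le_rpow_Gamma_mul_rpow_Gamma (s := x + α) (t := x + α + 1)
    (a := α) (b := 1 - α) (by linarith) (by linarith) h0 (by linarith) (by ring)
  have e : α * (x + α) + (1 - α) * (x + α + 1) = x + 1 := by ring
  have hG : 0 < Real.Gamma (x + α) := Real.Gamma_pos_of_pos (by linarith)
  rw [e, Real.Gamma_add_one hx.ne', Real.Gamma_add_one (by linarith : x + α ≠ 0),
    Real.mul_rpow (by linarith) hG.le, mul_left_comm, ← Real.rpow_add hG] at h
  simp only [add_sub_cancel, Real.rpow_one] at h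
  rw [div_le_div_iff₀ hG hx]
  linarith

lemma ml_ratio_tendsto {α β : ℝ} (h0 : 0 < α) (h1 : α < 1) (hβ : 0 < β) :
    Filter.Tendsto (fun n : ℕ => ‖1 / Real.Gamma (α * (n + 1 : ℕ) + β)‖ / ‖1 / Real.Gamma (α * n + β)‖)
      Filter.atTop (nhds 0) := by
  have hx : Filter.Tendsto (fun n : ℕ => α * (n : ℝ) + β) Filter.atTop Filter.atTop :=
    Filter.tendsto_atTop_add_const_right _ _
      (tendsto_natCast_atTop_atTop.const_mul_atTop h0)
  have hlim : Filter.Tendsto (fun x : ℝ => (x + α) ^ (1 - α) / x) Filter.atTop (nhds 0) := by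
    have hA : Filter.Tendsto (fun x : ℝ => (2:ℝ) ^ (1 - α) * x ^ (-α)) Filter.atTop (nhds 0) := by
      simpa using (tendsto_rpow_neg_atTop h0).const_mul ((2:ℝ) ^ (1 - α))
    refine squeeze_zero' ?_ ?_ hA
    · filter_upwards [Filter.eventually_gt_atTop 0] with x hx
      positivity
    · filter_upwards [Filter.eventually_gt_atTop 1] with x hx
      have : x ^ (-α) = x ^ (1 - α) / x := by
        rw [← Real.rpow_sub_one (by linarith)]; congr 1; ring
      rw [this, ← mul_div_assoc, ← Real.mul_rpow (by norm_num) (by linarith)]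
      gcongr
      linarith
  refine squeeze_zero (fun n => by positivity) (fun n => ?_) (hlim.comp hx)
  have hp : 0 < α * (n : ℝ) + β := by positivity
  have hG : 0 < Real.Gamma (α * n + β) := Real.Gamma_pos_of_pos hp
  have hp' : 0 < α * (n : ℝ) + β + α := by positivity
  have hG' : 0 < Real.Gamma (α * n + β + α) := Real.Gamma_pos_of_pos hp'
  have := ml_gamma_ratio h0 h1 hp
  have e : α * ((n + 1 : ℕ) : ℝ) + β = α * n + β + α := by push_cast; ring
  rw [e, Real.norm_of_nonneg (by positivity), Real.norm_of_nonneg (by positivity)]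
  calc _ = Real.Gamma (α * n + β) / Real.Gamma (α * n + β + α) := by field_simp
    _ ≤ _ := this

lemma ml_radius {α β : ℝ} (h0 : 0 < α) (h1 : α < 1) (hβ : 0 < β) :
    (FormalMultilinearSeries.ofScalars ℝ (fun n : ℕ => 1 / Real.Gamma (α * n + β))).radius = ⊤ := by
  apply FormalMultilinearSeries.ofScalars_radius_eq_top_of_tendsto
  · refine Filter.Eventually.of_forall fun n => ?_
    have : 0 < α * (n : ℝ) + β := by positivity
    have := Real.Gamma_pos_of_pos this
    positivity
  · exact ml_ratio_tendsto h0 h1 hβ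

lemma ml_contDiff {α β : ℝ} (h0 : 0 < α) (h1 : α < 1) (hβ : 0 < β) :
    ContDiff ℝ 1 (mittagLeffler α β) := by
  have h := (FormalMultilinearSeries.ofScalars ℝ
    (fun n : ℕ => 1 / Real.Gamma (α * n + β))).hasFPowerSeriesOnBall (by
      rw [ml_radius h0 h1 hβ]; simp)
  rw [ml_radius h0 h1 hβ] at h
  have h2 : mittagLeffler α β = (FormalMultilinearSeries.ofScalars ℝ
    (fun n : ℕ => 1 / Real.Gamma (α * n + β))).sum := by
    funext z
    change _ = FormalMultilinearSeries.ofScalarsSum _ z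
    rw [FormalMultilinearSeries.ofScalars_sum_eq]
    unfold mittagLeffler
    congr 1
    funext k
    rw [smul_eq_mul]; ring
  rw [h2]
  have := h.analyticOnNhd
  have h3 : AnalyticOnNhd ℝ (FormalMultilinearSeries.ofScalars ℝ
    (fun n : ℕ => 1 / Real.Gamma (α * n + β))).sum Set.univ := by simpa using this
  exact contDiffOn_univ.1 (h3.contDiffOn uniqueDiffOn_univ)

lemma ml_summable {α β : ℝ} (h0 : 0 < α) (h1 : α < 1) (hβ : 0 < β) (z : ℝ) :
    Summable (fun k : ℕ => z ^ k / Real.Gamma (α * k + β)) := by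
  have h := (FormalMultilinearSeries.ofScalars ℝ
    (fun n : ℕ => 1 / Real.Gamma (α * n + β))).summable (x := z) (by
      rw [ml_radius h0 h1 hβ]; simp)
  refine h.congr fun k => ?_
  rw [FormalMultilinearSeries.ofScalars_apply_eq, smul_eq_mul]; ring

/-- The resolvent kernel. -/
noncomputable def mlK (α lam x : ℝ) : ℝ := x ^ (α - 1) * mittagLeffler α α (-lam * x ^ α)

lemma ml_flip (f : ℝ → ℝ) {t : ℝ} (ht : 0 < t) :
    ∫ s in Set.Ioo 0 t, f (t - s) = ∫ s in Set.Ioo 0 t, f s := by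
  rw [← integral_Ioc_eq_integral_Ioo, ← integral_Ioc_eq_integral_Ioo,
    ← intervalIntegral.integral_of_le ht.le, ← intervalIntegral.integral_of_le ht.le,
    intervalIntegral.integral_comp_sub_left]
  simp

lemma ml_flip_int {f : ℝ → ℝ} {t : ℝ} (ht : 0 < t) (hf : IntegrableOn f (Set.Ioo 0 t)) :
    IntegrableOn (fun s => f (t - s)) (Set.Ioo 0 t) := by
  rw [← integrableOn_Ioc_iff_integrableOn_Ioo,
    ← intervalIntegrable_iff_integrableOn_Ioc_of_le ht.le] at hf ⊢
  simpa using (hf.comp_sub_left t).symm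

lemma mlK_measurable {α : ℝ} (h0 : 0 < α) (h1 : α < 1) (lam : ℝ) : Measurable (mlK α lam) := by
  have := (ml_contDiff h0 h1 h0).continuous.measurable
  unfold mlK
  fun_prop

lemma mlK_term {α lam x : ℝ} (hx : 0 < x) (k : ℕ) :
    x ^ (α - 1) * ((-lam * x ^ α) ^ k / Real.Gamma (α * k + α))
      = (-lam) ^ k / Real.Gamma (α * k + α) * x ^ (α * k + α - 1) := by
  have : x ^ (α * k + α - 1) = x ^ (α - 1) * (x ^ α) ^ k := by
    rw [← Real.rpow_natCast, ← Real.rpow_mul hx.le, ← Real.rpow_add hx]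
    congr 1; ring
  rw [this, mul_pow]; ring

lemma mlK_conv_int {α lam b t : ℝ} (h0 : 0 < α) (h1 : α < 1) (hb : 0 < b) (ht : 0 < t) :
    IntegrableOn (fun s => mlK α lam (t - s) * s ^ (b - 1)) (Set.Ioo 0 t) := by
  have hc : ContinuousOn (fun x : ℝ => mittagLeffler α α (-lam * x ^ α)) (Set.Icc 0 t) := by
    apply (ml_contDiff h0 h1 h0).continuous.comp_continuousOn
    exact (continuousOn_const.mul (continuousOn_id.rpow_const (fun x hx => Or.inr h0.le)))
  obtain ⟨C, hC⟩ := isCompact_Icc.exists_bound_of_continuousOn hc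
  refine Integrable.mono' ((ml_beta_int h0 hb ht).const_mul C) ?_ ?_
  · have := mlK_measurable h0 h1 lam
    exact Measurable.aestronglyMeasurable (by fun_prop)
  · refine (ae_restrict_iff' measurableSet_Ioo).2 (Filter.Eventually.of_forall fun s hs => ?_)
    have hts : 0 < t - s := by linarith [hs.2]
    have hs0 : 0 < s := hs.1
    have := hC (t - s) ⟨hts.le, by linarith⟩
    unfold mlK
    rw [norm_mul, norm_mul, Real.norm_of_nonneg (by positivity : 0 ≤ (t - s) ^ (α - 1)),
      Real.norm_of_nonneg (by positivity : 0 ≤ s ^ (b - 1))]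
    have h3 : 0 ≤ (t - s) ^ (α - 1) * s ^ (b - 1) := by positivity
    nlinarith

lemma mlK_conv {α lam b t : ℝ} (h0 : 0 < α) (h1 : α < 1) (hb : 0 < b) (ht : 0 < t) :
    ∫ s in Set.Ioo 0 t, mlK α lam (t - s) * s ^ (b - 1)
      = Real.Gamma b * t ^ (α + b - 1) * mittagLeffler α (α + b) (-lam * t ^ α) := by
  set F : ℕ → ℝ → ℝ := fun k s =>
    (-lam) ^ k / Real.Gamma (α * k + α) * ((t - s) ^ (α * k + α - 1) * s ^ (b - 1)) with hF
  have hpos : ∀ k : ℕ, 0 < α * k + α := fun k => by positivity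
  have hpow : ∀ k : ℕ, t ^ (α * k + α + b - 1) = t ^ (α + b - 1) * (t ^ α) ^ k := fun k => by
    rw [← Real.rpow_natCast, ← Real.rpow_mul ht.le, ← Real.rpow_add ht]
    congr 1; ring
  have hint : ∀ k, Integrable (F k) (volume.restrict (Set.Ioo 0 t)) := fun k =>
    (ml_beta_int (hpos k) hb ht).const_mul _
  have hval : ∀ k, ∫ s in Set.Ioo 0 t, F k s
      = Real.Gamma b * t ^ (α + b - 1) * ((-lam * t ^ α) ^ k / Real.Gamma (α * k + (α + b))) := by
    intro k
    have := Real.Gamma_pos_of_pos (hpos k)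
    simp only [hF]
    rw [integral_const_mul, ml_beta_conv (hpos k) hb ht, hpow, ← add_assoc, mul_pow]
    field_simp
  have hnorm : ∀ k, ∫ s in Set.Ioo 0 t, ‖F k s‖
      = Real.Gamma b * t ^ (α + b - 1) * ((|lam| * t ^ α) ^ k / Real.Gamma (α * k + (α + b))) := by
    intro k
    have hG := Real.Gamma_pos_of_pos (hpos k)
    have : ∫ s in Set.Ioo 0 t, ‖F k s‖ = ∫ s in Set.Ioo 0 t,
        |lam| ^ k / Real.Gamma (α * k + α) * ((t - s) ^ (α * k + α - 1) * s ^ (b - 1)) := by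
      refine setIntegral_congr_fun measurableSet_Ioo fun s hs => ?_
      have hts : 0 < t - s := by linarith [hs.2]
      have hs0 : 0 < s := hs.1
      simp only [hF]
      rw [norm_mul, Real.norm_of_nonneg (by positivity : 0 ≤ (t - s) ^ (α * k + α - 1) * s ^ (b - 1)),
        norm_div, norm_pow, norm_neg, Real.norm_eq_abs, Real.norm_of_nonneg hG.le]
    rw [this, integral_const_mul, ml_beta_conv (hpos k) hb ht, hpow, ← add_assoc, mul_pow]
    field_simp
  have hs := hasSum_integral_of_summable_integral_norm hint (by
    simp_rw [hnorm]
    exact (ml_summable h0 h1 (by linarith) _).mul_left _)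
  have hsum := hs.tsum_eq
  simp_rw [hval] at hsum
  rw [tsum_mul_left] at hsum
  change _ * mittagLeffler α (α + b) (-lam * t ^ α) = _ at hsum
  rw [hsum]
  refine setIntegral_congr_fun measurableSet_Ioo fun s hs => ?_
  have hts : 0 < t - s := by linarith [hs.2]
  simp only [mlK, mittagLeffler, hF]
  rw [← tsum_mul_left, ← tsum_mul_right]
  congr 1
  funext k
  rw [mlK_term hts]; ring

lemma ml_rec {α : ℝ} (h0 : 0 < α) (h1 : α < 1) (z : ℝ) :
    mittagLeffler α 1 z = 1 + z * mittagLeffler α (α + 1) z := by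
  unfold mittagLeffler
  rw [(ml_summable h0 h1 one_pos z).tsum_eq_zero_add, ← tsum_mul_left]
  simp only [pow_zero, Nat.cast_zero, mul_zero, zero_add, Real.Gamma_one, div_one]
  congr 2
  funext k
  rw [pow_succ]
  push_cast
  rw [show α * ((k : ℝ) + 1) + 1 = α * k + (α + 1) by ring]
  ring

lemma mlK_int {α lam t : ℝ} (h0 : 0 < α) (h1 : α < 1) (ht : 0 < t) :
    IntegrableOn (fun s => mlK α lam (t - s)) (Set.Ioo 0 t) := by
  simpa using mlK_conv_int (lam := lam) (b := 1) h0 h1 one_pos ht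

lemma mlK_int' {α lam t : ℝ} (h0 : 0 < α) (h1 : α < 1) (ht : 0 < t) :
    IntegrableOn (mlK α lam) (Set.Ioo 0 t) := by
  simpa using ml_flip_int ht (mlK_int (lam := lam) h0 h1 ht)

lemma mlK_resolvent {α lam t : ℝ} (h0 : 0 < α) (h1 : α < 1) (ht : 0 < t) :
    (∫ s in Set.Ioo 0 t, mlK α lam (t - s) * s ^ (-α))
      + Real.Gamma (1 - α) * lam * (∫ s in Set.Ioo 0 t, mlK α lam (t - s)) = Real.Gamma (1 - α) := by
  have e1 := mlK_conv (lam := lam) (b := 1 - α) h0 h1 (by linarith) ht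
  have e2 := mlK_conv (lam := lam) (b := 1) h0 h1 one_pos ht
  rw [show 1 - α - 1 = -α by ring, show α + (1 - α) = 1 by ring, sub_self, Real.rpow_zero,
    ml_rec h0 h1] at e1
  simp only [sub_self, Real.rpow_zero, mul_one, Real.Gamma_one, one_mul, add_sub_cancel_right] at e2
  rw [e1, e2]
  ring

lemma mlK_int_a {α lam t : ℝ} (h0 : 0 < α) (h1 : α < 1) (ht : 0 < t) :
    IntegrableOn (fun s => mlK α lam (t - s) * s ^ (-α)) (Set.Ioo 0 t) := by
  have := mlK_conv_int (lam := lam) (b := 1 - α) h0 h1 (by linarith) ht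
  rwa [show 1 - α - 1 = -α by ring] at this

lemma ml_rpow_convex {α y h R : ℝ} (h0 : 0 < α) (hy : 0 < y) (hh : 0 ≤ h) (hR : y + h ≤ R) :
    (y + h) ^ (-α) ≤ y ^ (-α) - α * R ^ (-α - 1) * h := by
  have hz : 0 < y + h := by linarith
  have hu : y = (y + h) * (1 - h / (y + h)) := by field_simp; ring
  have hw : 0 < 1 - h / (y + h) := by
    have : 1 - h / (y + h) = y / (y + h) := by field_simp; ring
    rw [this]; positivity
  have h2 : 1 + α * (h / (y + h)) ≤ (1 - h / (y + h)) ^ (-α) := by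
    rw [Real.rpow_def_of_pos hw]
    have := Real.log_le_sub_one_of_pos hw
    have := Real.add_one_le_exp (Real.log (1 - h / (y + h)) * -α)
    nlinarith
  have h3 : y ^ (-α) = (y + h) ^ (-α) * (1 - h / (y + h)) ^ (-α) := by
    rw [← Real.mul_rpow hz.le hw.le, ← hu]
  have h4 : (y + h) ^ (-α - 1) = (y + h) ^ (-α) / (y + h) := Real.rpow_sub_one hz.ne' _
  have h5 : R ^ (-α - 1) ≤ (y + h) ^ (-α - 1) :=
    Real.rpow_le_rpow_of_nonpos hz hR (by linarith)
  have h6 : (y + h) ^ (-α) * (1 + α * (h / (y + h))) ≤ y ^ (-α) := by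
    rw [h3]; gcongr
  have h7 : (y + h) ^ (-α) * (1 + α * (h / (y + h))) = (y + h) ^ (-α) + α * (y + h) ^ (-α - 1) * h := by
    rw [h4]; ring
  have h8 : α * R ^ (-α - 1) * h ≤ α * (y + h) ^ (-α - 1) * h := by gcongr
  linarith

lemma mlK_differentiableAt {α lam x : ℝ} (h0 : 0 < α) (h1 : α < 1) (hx : 0 < x) :
    DifferentiableAt ℝ (mlK α lam) x := by
  have hE : Differentiable ℝ (mittagLeffler α α) :=
    (ml_contDiff h0 h1 h0).differentiable (by norm_num)
  have a1 : DifferentiableAt ℝ (fun y : ℝ => y ^ (α - 1)) x :=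
    (Real.hasDerivAt_rpow_const (Or.inl hx.ne')).differentiableAt
  have a2 : DifferentiableAt ℝ (fun y : ℝ => y ^ α) x :=
    (Real.hasDerivAt_rpow_const (Or.inl hx.ne')).differentiableAt
  exact a1.mul ((hE _).comp x (a2.const_mul (-lam)))

/-- No first zero of the kernel. -/
lemma mlK_no_first {α lam t : ℝ} (h0 : 0 < α) (h1 : α < 1) (ht : 0 < t)
    (hpos : ∀ s ∈ Set.Ioo 0 t, 0 < mlK α lam s) (hz : mlK α lam t ≤ 0) : False := by
  set K := mlK α lam with hK
  have hG : 0 < Real.Gamma (1 - α) := Real.Gamma_pos_of_pos (by linarith)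
  obtain ⟨C, hC⟩ := (mlK_differentiableAt (lam := lam) h0 h1 ht).isBigO_sub.bound
  obtain ⟨η, hη, hball⟩ := Metric.eventually_nhds_iff.1 hC
  set C' := max C 0 with hC'
  have hC0 : 0 ≤ C' := le_max_right _ _
  have hbd : ∀ s, s < t → t - s < η → K s ≤ C' * (t - s) := by
    intro s hs1 hs2
    have h := hball (y := s) (by rw [Real.dist_eq, abs_sub_comm, abs_of_pos (by linarith)]; exact hs2)
    rw [Real.norm_eq_abs, Real.norm_eq_abs, abs_sub_comm s t, abs_of_pos (by linarith : 0 < t - s)] at h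
    have h' := le_abs_self (mlK α lam s - mlK α lam t)
    have : C * (t - s) ≤ C' * (t - s) :=
      mul_le_mul_of_nonneg_right (le_max_left _ _) (by linarith)
    change mlK α lam s ≤ _
    linarith
  -- integrability facts
  have iK : IntegrableOn K (Set.Ioo 0 t) := mlK_int' h0 h1 ht
  have iA : ∀ x, 0 < x → IntegrableOn (fun s => (x - s) ^ (-α) * K s) (Set.Ioo 0 x) := by
    intro x hx
    have := ml_flip_int hx (mlK_int_a (lam := lam) h0 h1 hx)
    refine this.congr_fun (fun s hs => ?_) measurableSet_Ioo
    simp only [sub_sub_cancel]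
    rw [mul_comm]
  have res : ∀ x, 0 < x → (∫ s in Set.Ioo 0 x, (x - s) ^ (-α) * K s)
      + Real.Gamma (1 - α) * lam * (∫ s in Set.Ioo 0 x, K s) = Real.Gamma (1 - α) := by
    intro x hx
    have h := mlK_resolvent (lam := lam) h0 h1 hx
    rw [← ml_flip (fun s => mlK α lam (x - s) * s ^ (-α)) hx, ml_flip (mlK α lam) hx] at h
    simp only [sub_sub_cancel] at h
    simpa only [mul_comm] using h
  set P0 := ∫ s in Set.Ioo 0 (t / 2), K s with hP0
  have hP0pos : 0 < P0 := by
    have : 0 < ∫ s in (0:ℝ)..(t/2), K s := by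
      apply intervalIntegral.intervalIntegral_pos_of_pos_on
      · rw [intervalIntegrable_iff_integrableOn_Ioc_of_le (by linarith),
          integrableOn_Ioc_iff_integrableOn_Ioo]
        exact iK.mono_set (Set.Ioo_subset_Ioo_right (by linarith))
      · intro x hx
        exact hpos x ⟨hx.1, by linarith [hx.2]⟩
      · linarith
    rwa [intervalIntegral.integral_of_le (by linarith), integral_Ioc_eq_integral_Ioo] at this
  set c1 := α * t ^ (-α - 1) with hc1
  have hc1pos : 0 < c1 := by positivity
  have main : ∀ h, 0 < h → h < η → h < t / 2 →
      c1 * P0 ≤ C' * h ^ (1 - α) + Real.Gamma (1 - α) * |lam| * C' * h := by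
    intro h hh hh1 hh2
    have hx : 0 < t - h := by linarith
    have hsplit : Set.Ioo 0 t = Set.Ioo 0 (t - h) ∪ Set.Ico (t - h) t :=
      (Set.Ioo_union_Ico_eq_Ioo hx (by linarith)).symm
    have hdisj : Disjoint (Set.Ioo 0 (t - h)) (Set.Ico (t - h) t) :=
      Set.disjoint_left.2 fun x hx1 hx2 => absurd hx1.2 (not_lt.2 hx2.1)
    have sub1 : Set.Ioo 0 (t - h) ⊆ Set.Ioo 0 t := hsplit ▸ Set.subset_union_left
    have sub2 : Set.Ico (t - h) t ⊆ Set.Ioo 0 t := hsplit ▸ Set.subset_union_right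
    have hvol : volume.real (Set.Ico (t - h) t) = h := by
      simp [Measure.real, hh.le]
    have q1 : ∫ s in Set.Ioo 0 t, K s
        = (∫ s in Set.Ioo 0 (t - h), K s) + ∫ s in Set.Ico (t - h) t, K s := by
      rw [hsplit, setIntegral_union hdisj measurableSet_Ico (iK.mono_set sub1) (iK.mono_set sub2)]
    have q2 : ∫ s in Set.Ioo 0 t, (t - s) ^ (-α) * K s
        = (∫ s in Set.Ioo 0 (t - h), (t - s) ^ (-α) * K s)
          + ∫ s in Set.Ico (t - h) t, (t - s) ^ (-α) * K s := by
      rw [hsplit, setIntegral_union hdisj measurableSet_Ico ((iA t ht).mono_set sub1)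
        ((iA t ht).mono_set sub2)]
    have b1 : ∫ s in Set.Ico (t - h) t, K s ≤ C' * h * h := by
      have : ∫ s in Set.Ico (t - h) t, K s ≤ ∫ s in Set.Ico (t - h) t, C' * h := by
        refine setIntegral_mono_on (iK.mono_set sub2) (integrableOn_const (by simp)) measurableSet_Ico fun s hs => ?_
        refine (hbd s hs.2 (by linarith [hs.1])).trans ?_
        gcongr
        linarith [hs.1]
      rw [setIntegral_const, hvol, smul_eq_mul] at this
      linarith
    have b1' : 0 ≤ ∫ s in Set.Ico (t - h) t, K s :=
      setIntegral_nonneg measurableSet_Ico fun s hs => (hpos s (sub2 hs)).le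
    have b2 : ∫ s in Set.Ico (t - h) t, (t - s) ^ (-α) * K s ≤ C' * h ^ (1 - α) * h := by
      have : ∫ s in Set.Ico (t - h) t, (t - s) ^ (-α) * K s
          ≤ ∫ s in Set.Ico (t - h) t, C' * h ^ (1 - α) := by
        refine setIntegral_mono_on ((iA t ht).mono_set sub2) (integrableOn_const (by simp)) measurableSet_Ico fun s hs => ?_
        have hts : 0 < t - s := by linarith [hs.2]
        have hth : t - s ≤ h := by linarith [hs.1]
        calc (t - s) ^ (-α) * K s ≤ (t - s) ^ (-α) * (C' * (t - s)) := by
              gcongr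
              exact hbd s hs.2 (by linarith)
          _ = C' * (t - s) ^ (1 - α) := by
              have : (t - s) ^ (1 - α) = (t - s) ^ (-α) * (t - s) := by
                rw [← Real.rpow_add_one hts.ne']; congr 1; ring
              rw [this]; ring
          _ ≤ C' * h ^ (1 - α) := by
              gcongr
      rw [setIntegral_const, hvol, smul_eq_mul] at this
      linarith
    have b3 : ∫ s in Set.Ioo 0 (t - h), (t - s) ^ (-α) * K s
        ≤ (∫ s in Set.Ioo 0 (t - h), (t - h - s) ^ (-α) * K s)
          - c1 * h * ∫ s in Set.Ioo 0 (t - h), K s := by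
      rw [← integral_const_mul, ← integral_sub (iA _ hx) ((iK.mono_set sub1).const_mul _)]
      refine setIntegral_mono_on ((iA t ht).mono_set sub1)
        ((iA _ hx).sub ((iK.mono_set sub1).const_mul _)) measurableSet_Ioo fun s hs => ?_
      have := ml_rpow_convex (α := α) (y := t - h - s) (h := h) (R := t) h0 (by linarith [hs.2]) hh.le
        (by linarith [hs.1])
      rw [show t - h - s + h = t - s by ring] at this
      have hk := hpos s (sub1 hs)
      nlinarith
    have b4 : P0 ≤ ∫ s in Set.Ioo 0 (t - h), K s := by
      refine setIntegral_mono_set (iK.mono_set sub1) ?_ ?_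
      · refine (ae_restrict_iff' measurableSet_Ioo).2 (Filter.Eventually.of_forall fun s hs => ?_)
        exact (hpos s (sub1 hs)).le
      · exact (Set.Ioo_subset_Ioo_right (by linarith)).eventuallyLE
    have r1 := res t ht
    have r2 := res (t - h) hx
    rw [q1, q2] at r1
    have b5 : c1 * h * P0 ≤ c1 * h * ∫ s in Set.Ioo 0 (t - h), K s := by gcongr
    set Q := ∫ s in Set.Ico (t - h) t, K s with hQ
    have b6 : Real.Gamma (1 - α) * lam * Q ≤ Real.Gamma (1 - α) * |lam| * (C' * h * h) := by
      calc Real.Gamma (1 - α) * lam * Q ≤ Real.Gamma (1 - α) * |lam| * Q := by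
            gcongr
            exact le_abs_self lam
        _ ≤ _ := by gcongr
    have b7 : c1 * h * P0 ≤ C' * h ^ (1 - α) * h + Real.Gamma (1 - α) * |lam| * (C' * h * h) := by
      linarith
    refine le_of_mul_le_mul_right ?_ hh
    linarith
  have lim : Filter.Tendsto (fun h : ℝ => C' * h ^ (1 - α) + Real.Gamma (1 - α) * |lam| * C' * h)
      (nhdsWithin 0 (Set.Ioi 0)) (nhds 0) := by
    have : Continuous (fun h : ℝ => C' * h ^ (1 - α) + Real.Gamma (1 - α) * |lam| * C' * h) :=
      (continuous_const.mul (Real.continuous_rpow_const (by linarith))).add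
        (continuous_const.mul continuous_id)
    have h2 := (this.tendsto 0).mono_left (nhdsWithin_le_nhds (s := Set.Ioi 0))
    simpa [Real.zero_rpow (by linarith : 1 - α ≠ 0)] using h2
  have : c1 * P0 ≤ 0 := by
    refine ge_of_tendsto lim ?_
    filter_upwards [Ioo_mem_nhdsGT (lt_min hη (by linarith : 0 < t / 2))] with h hh
    exact main h hh.1 (hh.2.trans_le (min_le_left _ _)) (hh.2.trans_le (min_le_right _ _))
  have : 0 < c1 * P0 := by positivity
  linarith

lemma mlK_pos {α lam : ℝ} (h0 : 0 < α) (h1 : α < 1) {t : ℝ} (ht : 0 < t) : 0 < mlK α lam t := by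
  by_contra hneg
  set F : ℝ → ℝ := fun x => mittagLeffler α α (-lam * x ^ α) with hF
  have hFc : Continuous F := (ml_contDiff h0 h1 h0).continuous.comp
    (continuous_const.mul (Real.continuous_rpow_const h0.le))
  have hKF : ∀ x, mlK α lam x = x ^ (α - 1) * F x := fun x => rfl
  have hF0 : 0 < F 0 := by
    have : F 0 = 1 / Real.Gamma α := by
      simp only [hF, Real.zero_rpow h0.ne', mul_zero, mittagLeffler]
      rw [tsum_eq_single 0]
      · simp
      · intro k hk; simp [hk]
    rw [this]
    have := Real.Gamma_pos_of_pos h0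
    positivity
  set S := Set.Icc 0 t ∩ F ⁻¹' (Set.Iic 0) with hS
  have hSc : IsCompact S := isCompact_Icc.inter_right (isClosed_Iic.preimage hFc)
  have htS : t ∈ S := by
    refine ⟨⟨ht.le, le_rfl⟩, ?_⟩
    by_contra h
    apply hneg
    rw [hKF]
    have : 0 < F t := not_le.1 h
    positivity
  obtain ⟨t0, ht0, hmin⟩ := hSc.exists_isLeast ⟨t, htS⟩
  have ht0pos : 0 < t0 := by
    rcases ht0.1.1.lt_or_eq with h | h
    · exact h
    · exfalso
      have : F t0 ≤ 0 := ht0.2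
      rw [← h] at this
      linarith
  refine mlK_no_first (lam := lam) h0 h1 ht0pos (fun s hs => ?_) ?_
  · rw [hKF]
    have : 0 < F s := by
      by_contra h
      have := hmin (a := s) ⟨⟨hs.1.le, hs.2.le.trans ht0.1.2⟩, not_lt.1 h⟩
      linarith [hs.2]
    have := hs.1
    positivity
  · rw [hKF]
    exact mul_nonpos_of_nonneg_of_nonpos (by positivity) ht0.2

lemma ml_fubini {K G u : ℝ → ℝ} (hK : Measurable K) (hG : Measurable G) {t A : ℝ}
    (hu : IntegrableOn u (Set.Ioo 0 t))
    (hi : ∀ x ∈ Set.Ioc 0 t, IntegrableOn (fun y => K (x - y) * G y) (Set.Ioo 0 x))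
    (hA : ∀ x ∈ Set.Ioc 0 t, ∫ y in Set.Ioo 0 x, ‖K (x - y) * G y‖ ≤ A)
    (h1 : ∀ x ∈ Set.Ioc 0 t, ∫ y in Set.Ioo 0 x, K (x - y) * G y = 1) :
    IntegrableOn (fun s => K (t - s) * ∫ σ in Set.Ioo 0 s, G (s - σ) * u σ) (Set.Ioo 0 t) ∧
    ∫ s in Set.Ioo 0 t, (K (t - s) * ∫ σ in Set.Ioo 0 s, G (s - σ) * u σ)
      = ∫ σ in Set.Ioo 0 t, u σ := by
  set μ := volume.restrict (Set.Ioo 0 t) with hμ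
  set f : ℝ → ℝ → ℝ := fun σ s =>
    (Set.Ioi σ).indicator (fun s => K (t - s) * G (s - σ)) s * u σ with hf
  -- translation facts
  have shift : ∀ (F : ℝ → ℝ), ∀ σ ∈ Set.Ioo 0 t, ∫ s in Set.Ioo σ t, F (s - σ) = ∫ y in Set.Ioo 0 (t - σ), F y := by
    intro F σ hσ
    rw [← integral_Ioc_eq_integral_Ioo, ← integral_Ioc_eq_integral_Ioo,
      ← intervalIntegral.integral_of_le hσ.2.le, ← intervalIntegral.integral_of_le (by linarith [hσ.2]),
      intervalIntegral.integral_comp_sub_right]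
    simp
  have inter : ∀ σ ∈ Set.Ioo 0 t, Set.Ioo 0 t ∩ Set.Ioi σ = Set.Ioo σ t := by
    intro σ hσ
    ext s
    simp only [Set.mem_inter_iff, Set.mem_Ioo, Set.mem_Ioi]
    constructor
    · rintro ⟨⟨_, h⟩, h'⟩; exact ⟨h', h⟩
    · rintro ⟨h', h⟩; exact ⟨⟨hσ.1.trans h', h⟩, h'⟩
  have hmemx : ∀ σ ∈ Set.Ioo 0 t, t - σ ∈ Set.Ioc 0 t := fun σ hσ =>
    ⟨by linarith [hσ.2], by linarith [hσ.1]⟩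
  have hKi : ∀ σ ∈ Set.Ioo 0 t, Integrable ((Set.Ioi σ).indicator (fun s => K (t - s) * G (s - σ))) μ := by
    intro σ hσ
    rw [integrable_indicator_iff measurableSet_Ioi, IntegrableOn, hμ,
      Measure.restrict_restrict measurableSet_Ioi, Set.inter_comm, inter σ hσ]
    have h := hi _ (hmemx σ hσ)
    change IntegrableOn _ _ _
    rw [← integrableOn_Ioc_iff_integrableOn_Ioo,
      ← intervalIntegrable_iff_integrableOn_Ioc_of_le (by linarith [hσ.2])] at h ⊢
    have h2 := h.comp_sub_right σ
    simp only [zero_add, sub_add_cancel] at h2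
    convert h2 using 2 with s
    ring_nf
  have hval : ∀ σ ∈ Set.Ioo 0 t, ∫ s, f σ s ∂μ = u σ := by
    intro σ hσ
    simp only [hf]
    rw [integral_mul_const, hμ, setIntegral_indicator measurableSet_Ioi, inter σ hσ]
    have h := shift (fun y => K (t - σ - y) * G y) σ hσ
    rw [h1 _ (hmemx σ hσ)] at h
    simp only [sub_sub_sub_cancel_right] at h
    rw [h, one_mul]
  have hvaln : ∀ σ ∈ Set.Ioo 0 t, ∫ s, ‖f σ s‖ ∂μ ≤ A * ‖u σ‖ := by
    intro σ hσ
    simp only [hf, norm_mul, norm_indicator_eq_indicator_norm]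
    rw [integral_mul_const, hμ, setIntegral_indicator measurableSet_Ioi, inter σ hσ]
    have h := shift (fun y => ‖K (t - σ - y) * G y‖) σ hσ
    have h2 := hA _ (hmemx σ hσ)
    rw [← h] at h2
    simp only [sub_sub_sub_cancel_right, norm_mul] at h2
    gcongr
  have hmeas : AEStronglyMeasurable (Function.uncurry f) (μ.prod μ) := by
    have hm : MeasurableSet {p : ℝ × ℝ | p.1 < p.2} := measurableSet_lt measurable_fst measurable_snd
    have hb : Measurable ({p : ℝ × ℝ | p.1 < p.2}.indicator (fun p => K (t - p.2) * G (p.2 - p.1))) :=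
      Measurable.indicator (by fun_prop) hm
    have := hb.aestronglyMeasurable (μ := μ.prod μ)
    have h2 : AEStronglyMeasurable (fun p : ℝ × ℝ => u p.1) (μ.prod μ) := hu.1.comp_fst
    refine (this.mul h2).congr (Filter.Eventually.of_forall fun p => ?_)
    simp only [Function.uncurry, hf, Pi.mul_apply]
    congr 1
  have hint : Integrable (Function.uncurry f) (μ.prod μ) := by
    rw [integrable_prod_iff hmeas]
    constructor
    · refine (ae_restrict_iff' measurableSet_Ioo).2 (Filter.Eventually.of_forall fun σ hσ => ?_)
      exact (hKi σ hσ).mul_const (u σ)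
    · refine Integrable.mono' (hu.norm.const_mul A) hmeas.norm.integral_prod_right' ?_
      refine (ae_restrict_iff' measurableSet_Ioo).2 (Filter.Eventually.of_forall fun σ hσ => ?_)
      rw [Real.norm_of_nonneg (integral_nonneg fun _ => norm_nonneg _)]
      exact hvaln σ hσ
  have hinner : ∀ s ∈ Set.Ioo 0 t, ∫ σ, f σ s ∂μ = K (t - s) * ∫ σ in Set.Ioo 0 s, G (s - σ) * u σ := by
    intro s hs
    have e : ∀ σ, f σ s = (Set.Iio s).indicator (fun σ => K (t - s) * (G (s - σ) * u σ)) σ := by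
      intro σ
      simp only [hf, Set.indicator_apply, Set.mem_Ioi, Set.mem_Iio]
      split_ifs <;> ring
    simp_rw [e]
    rw [hμ, setIntegral_indicator measurableSet_Iio, integral_const_mul]
    congr 3
    ext σ
    simp only [Set.mem_inter_iff, Set.mem_Ioo, Set.mem_Iio]
    constructor
    · rintro ⟨⟨h, _⟩, h'⟩; exact ⟨h, h'⟩
    · rintro ⟨h, h'⟩; exact ⟨⟨h, h'.trans hs.2⟩, h'⟩
  constructor
  · have h := hint.integral_prod_right
    refine IntegrableOn.congr_fun (s := Set.Ioo 0 t) h (fun s hs => ?_) measurableSet_Ioo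
    exact hinner s hs
  · rw [← setIntegral_congr_fun measurableSet_Ioo hinner,
      ← setIntegral_congr_fun measurableSet_Ioo hval]
    exact (integral_integral_swap hint).symm

lemma ml_key {α t : ℝ} (h0 : 0 < α) (ht : 0 < t) {φ φ' : ℝ → ℝ}
    (hc : ContinuousOn φ (Set.Icc 0 t)) (hd : ∀ s ∈ Set.Ioo 0 t, HasDerivAt φ (φ' s) s)
    (hle : ∀ s ∈ Set.Icc 0 t, φ s ≤ 0) (hφt : φ t = 0)
    (hi : IntegrableOn φ' (Set.Ioo 0 t))
    (hi2 : IntegrableOn (fun s => (t - s) ^ (-α) * φ' s) (Set.Ioo 0 t)) :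
    0 ≤ t ^ (-α) * φ 0 + ∫ s in Set.Ioo 0 t, (t - s) ^ (-α) * φ' s := by
  set ψ : ℝ → ℝ := fun s => (t - s) ^ (-α) * φ s with hψ
  have hi2' : IntegrableOn (fun s => (t - s) ^ (-α) * φ' s) (Set.Icc 0 t) := by
    rwa [integrableOn_Icc_iff_integrableOn_Ioo]
  have hi' : IntegrableOn φ' (Set.Icc 0 t) := by
    rwa [integrableOn_Icc_iff_integrableOn_Ioo]
  have hbound : ∀ x ∈ Set.Icc 0 t, ‖ψ x‖ ≤ ∫ s in x..t, ‖(t - s) ^ (-α) * φ' s‖ := by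
    intro x hx
    have sub : Set.Icc x t ⊆ Set.Icc 0 t := Set.Icc_subset_Icc_left hx.1
    have ii : IntervalIntegrable φ' volume x t := by
      rw [intervalIntegrable_iff_integrableOn_Icc_of_le hx.2]; exact hi'.mono_set sub
    have ii2 : IntervalIntegrable (fun s => (t - s) ^ (-α) * φ' s) volume x t := by
      rw [intervalIntegrable_iff_integrableOn_Icc_of_le hx.2]; exact hi2'.mono_set sub
    have ftc := intervalIntegral.integral_eq_sub_of_hasDerivAt_of_le hx.2 (hc.mono sub)
      (fun s hs => hd s ⟨hx.1.trans_lt hs.1, hs.2⟩) ii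
    rw [hφt, zero_sub] at ftc
    have hn : ‖φ x‖ ≤ ∫ s in x..t, ‖φ' s‖ := by
      rw [← norm_neg, ← ftc]
      exact intervalIntegral.norm_integral_le_integral_norm hx.2
    have hnn : 0 ≤ (t - x) ^ (-α) := Real.rpow_nonneg (by linarith [hx.2]) _
    simp only [hψ]
    rw [norm_mul, Real.norm_of_nonneg hnn]
    calc (t - x) ^ (-α) * ‖φ x‖ ≤ (t - x) ^ (-α) * ∫ s in x..t, ‖φ' s‖ := by gcongr
      _ = ∫ s in x..t, (t - x) ^ (-α) * ‖φ' s‖ := by rw [intervalIntegral.integral_const_mul]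
      _ ≤ _ := by
        refine intervalIntegral.integral_mono_on_of_le_Ioo hx.2 (ii.norm.const_mul _) ii2.norm ?_
        intro s hs
        rw [norm_mul, Real.norm_of_nonneg (Real.rpow_nonneg (by linarith [hs.2]) _)]
        gcongr ?_ * _
        exact Real.rpow_le_rpow_of_nonpos (by linarith [hs.2]) (by linarith [hs.1]) (by linarith)
  have hψt : ψ t = 0 := by simp [hψ, hφt]
  have hψc : ContinuousOn ψ (Set.Icc 0 t) := by
    intro x hx
    rcases hx.2.lt_or_eq with hlt | heq
    · refine ContinuousWithinAt.mul ?_ (hc x hx)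
      apply ContinuousAt.continuousWithinAt
      exact ContinuousAt.rpow_const (by fun_prop) (Or.inl (by linarith))
    · subst heq
      have hprim : ContinuousOn (fun y => ∫ s in y..x, ‖(x - s) ^ (-α) * φ' s‖) (Set.uIcc 0 x) := by
        apply intervalIntegral.continuousOn_primitive_interval_left
        rw [Set.uIcc_of_le ht.le]
        exact hi2'.norm
      rw [Set.uIcc_of_le ht.le] at hprim
      have hl := hprim x hx
      unfold ContinuousWithinAt at hl ⊢
      simp only [intervalIntegral.integral_same] at hl
      rw [hψt]
      refine squeeze_zero_norm' ?_ hl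
      filter_upwards [self_mem_nhdsWithin] with y hy
      exact hbound y hy
  have hmain := intervalIntegral.sub_le_integral_of_hasDeriv_right_of_le ht.le hψc
    (g' := fun s => α * (t - s) ^ (-α - 1) * φ s + (t - s) ^ (-α) * φ' s)
    (fun s hs => by
      have a1 : HasDerivAt (fun s : ℝ => t - s) (-1) s := by
        simpa using (hasDerivAt_id s).const_sub t
      have a2 := (a1.rpow_const (p := -α) (Or.inl (by linarith [hs.2]))).mul (hd s hs)
      refine HasDerivAt.hasDerivWithinAt ?_
      exact HasDerivAt.congr_deriv a2 (by ring)) hi2'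
    (fun s hs => by
      have : 0 ≤ α * (t - s) ^ (-α - 1) :=
        mul_nonneg h0.le (Real.rpow_nonneg (by linarith [hs.2]) _)
      have := mul_nonpos_of_nonneg_of_nonpos this (hle s ⟨hs.1.le, hs.2.le⟩)
      linarith)
  rw [hψt, intervalIntegral.integral_of_le ht.le, integral_Ioc_eq_integral_Ioo] at hmain
  simp only [hψ, sub_zero] at hmain
  linarith

/-- Comparison step for the regularised norm. -/
lemma ml_reg_bound {H : Type*} [NormedAddCommGroup H] [InnerProductSpace ℝ H] [CompleteSpace H]
    {α lam t δ R : ℝ} (h0 : 0 < α) (h1 : α < 1) (ht : 0 < t) (hδ : 0 < δ)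
    {eb eb' : ℝ → H} {v v' : ℝ → ℝ}
    (hc : ContinuousOn eb (Set.Icc 0 t))
    (hd : ∀ s ∈ Set.Ioo 0 t, HasDerivAt eb (eb' s) s)
    (hv : ∀ s, v s = √(‖eb s‖ ^ 2 + δ ^ 2))
    (hvd : ∀ s ∈ Set.Ioo 0 t, HasDerivAt v (v' s) s)
    (hi : IntegrableOn eb' (Set.Ioo 0 t)) (hi2 : IntegrableOn v' (Set.Ioo 0 t))
    (hj : IntegrableOn (fun s => (t - s) ^ (-α) • eb' s) (Set.Ioo 0 t))
    (hj2 : IntegrableOn (fun s => (t - s) ^ (-α) * v' s) (Set.Ioo 0 t))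
    (hR : 0 ≤ R)
    (hres : (1 / Real.Gamma (1 - α)) *
          ⟪(t ^ (-α) • eb 0 + ∫ s in Set.Ioo 0 t, (t - s) ^ (-α) • eb' s), eb t⟫
        + lam * ‖eb t‖ ^ 2 ≤ R * ‖eb t‖) :
    (1 / Real.Gamma (1 - α)) * (t ^ (-α) * v 0 + ∫ s in Set.Ioo 0 t, (t - s) ^ (-α) * v' s)
      + lam * v t ≤ R + δ * (t ^ (-α) / Real.Gamma (1 - α) + |lam|) := by
  have hG : 0 < Real.Gamma (1 - α) := Real.Gamma_pos_of_pos (by linarith)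
  have hvsq : ∀ s, v s ^ 2 = ‖eb s‖ ^ 2 + δ ^ 2 := fun s => by
    rw [hv, Real.sq_sqrt (by positivity)]
  have hvpos : ∀ s, 0 < v s := fun s => by rw [hv]; positivity
  have hvn : ∀ s, ‖eb s‖ ≤ v s := fun s =>
    abs_le_of_sq_le_sq' (by rw [hvsq]; nlinarith) (hvpos s).le |>.2
  have hvδ : ∀ s, δ ≤ v s := fun s =>
    abs_le_of_sq_le_sq' (by rw [hvsq]; nlinarith [sq_nonneg ‖eb s‖]) (hvpos s).le |>.2
  have hvc : ContinuousOn v (Set.Icc 0 t) := by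
    have : v = fun s => √(‖eb s‖ ^ 2 + δ ^ 2) := funext hv
    rw [this]
    exact ((hc.norm.pow 2).add continuousOn_const).sqrt
  have key := ml_key (α := α) h0 ht (φ := fun s => ⟪eb s, eb t⟫ + δ ^ 2 - v s * v t)
    (φ' := fun s => ⟪eb' s, eb t⟫ - v' s * v t)
    (((hc.inner continuousOn_const).add continuousOn_const).sub (hvc.mul continuousOn_const))
    (fun s hs => by
      have a1 : HasDerivAt (fun s => ⟪eb s, eb t⟫) ⟪eb' s, eb t⟫ s := by
        simpa using (hd s hs).inner ℝ (hasDerivAt_const s (eb t))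
      exact (a1.add_const _).sub ((hvd s hs).mul_const _))
    (fun s hs => by
      have a1 : ⟪eb s, eb t⟫ ≤ ‖eb s‖ * ‖eb t‖ := real_inner_le_norm _ _
      have a2 : ‖eb s‖ * ‖eb t‖ + δ ^ 2 ≤ v s * v t := by
        refine abs_le_of_sq_le_sq' ?_ (mul_pos (hvpos s) (hvpos t)).le |>.2
        rw [mul_pow, hvsq, hvsq]
        nlinarith [sq_nonneg (‖eb s‖ - ‖eb t‖), mul_nonneg (sq_nonneg δ) (sq_nonneg (‖eb s‖ - ‖eb t‖))]
      linarith)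
    (by
      rw [real_inner_self_eq_norm_sq, ← hvsq]; ring)
    ((hi.inner_const (𝕜 := ℝ) (eb t)).sub (hi2.mul_const _))
    (by
      have := (hj.inner_const (𝕜 := ℝ) (eb t)).sub (hj2.mul_const (v t))
      refine this.congr (Filter.Eventually.of_forall fun s => ?_)
      simp only [Pi.sub_apply, real_inner_smul_left]
      ring)
  have hI : ∫ s in Set.Ioo 0 t, (t - s) ^ (-α) * (⟪eb' s, eb t⟫ - v' s * v t)
      = ⟪∫ s in Set.Ioo 0 t, (t - s) ^ (-α) • eb' s, eb t⟫
        - (∫ s in Set.Ioo 0 t, (t - s) ^ (-α) * v' s) * v t := by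
    rw [real_inner_comm, ← integral_inner hj, ← integral_mul_const,
      ← integral_sub (hj.const_inner (𝕜 := ℝ) (eb t)) (hj2.mul_const (v t))]
    congr 1
    funext s
    rw [real_inner_smul_right, real_inner_comm]
    ring
  rw [hI] at key
  rw [inner_add_left, real_inner_smul_left] at hres
  set I := ⟪∫ s in Set.Ioo 0 t, (t - s) ^ (-α) • eb' s, eb t⟫
  set J := ∫ s in Set.Ioo 0 t, (t - s) ^ (-α) * v' s
  set g := Real.Gamma (1 - α)
  have hvt := hvpos t
  refine le_of_mul_le_mul_right (a := v t) ?_ hvt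
  have c1 : (1 / g) * ((t ^ (-α) * v 0 + J) * v t)
      ≤ (1 / g) * (t ^ (-α) * ⟪eb 0, eb t⟫ + I + t ^ (-α) * δ ^ 2) := by
    gcongr
    linarith
  have c2 : R * ‖eb t‖ ≤ R * v t := by gcongr; exact hvn t
  have c3 : lam * (δ ^ 2) ≤ |lam| * (δ * v t) := by
    have : δ ^ 2 ≤ δ * v t := by nlinarith [hvδ t]
    calc lam * δ ^ 2 ≤ |lam| * δ ^ 2 := by gcongr; exact le_abs_self lam
      _ ≤ _ := by gcongr
  have c4 : (1 / g) * (t ^ (-α) * δ ^ 2) ≤ (1 / g) * (t ^ (-α) * (δ * v t)) := by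
    gcongr
    nlinarith [hvδ t]
  have c5 : lam * v t * v t = lam * ‖eb t‖ ^ 2 + lam * δ ^ 2 := by
    rw [mul_assoc, ← sq, hvsq]; ring
  have c6 : δ * (t ^ (-α) / g + |lam|) * v t
      = (1 / g) * (t ^ (-α) * (δ * v t)) + |lam| * (δ * v t) := by ring
  have c7 : (1 / g) * (t ^ (-α) * ⟪eb 0, eb t⟫ + I + t ^ (-α) * δ ^ 2)
      = (1 / g) * (t ^ (-α) * ⟪eb 0, eb t⟫ + I) + (1 / g) * (t ^ (-α) * δ ^ 2) := by ring
  rw [add_mul, add_mul, c6, c5]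
  linarith

/-- Corollary 2.3 (the case `u_h(·,0) ≠ u₀`) in abstract form: the error `e` equals
a continuous function `ē` for `t > 0` but is reset to `0` at `t = 0`; the initial
mismatch `d = ē(0)` contributes the extra residual term `d · t^(-α)/Γ(1-α)`, and the
a posteriori bound `‖e(t)‖ ≤ (D_t^α + λ)⁻¹ r (t)` holds with the modified residual. -/
theorem apriori_error_bound_initial_mismatch
    {H : Type*} [NormedAddCommGroup H] [InnerProductSpace ℝ H] [CompleteSpace H]
    (α lam T : ℝ) (hα : α ∈ Set.Ioo (0 : ℝ) 1) (hT : 0 < T) (d : H)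
    (ebar ebar' : ℝ → H) (e : ℝ → H) (r : ℝ → ℝ)
    (hebar_cont : ContinuousOn ebar (Set.Icc 0 T))
    (hebar0 : ebar 0 = d)
    (hderiv : ∀ s ∈ Set.Ioo 0 T, HasDerivAt ebar (ebar' s) s)
    (hint : ∀ t ∈ Set.Ioc 0 T, IntegrableOn (fun s => (t - s) ^ (-α) * ‖ebar' s‖) (Set.Ioo 0 t))
    (hlip : ∀ ε ∈ Set.Ioo 0 T, ∃ K : NNReal, LipschitzOnWith K (fun s => ‖ebar s‖) (Set.Icc ε T))
    (he0 : e 0 = 0)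
    (he : ∀ t ∈ Set.Ioc 0 T, e t = ebar t)
    (hr_nonneg : ∀ t ∈ Set.Ioc 0 T, 0 ≤ r t)
    (hr_cont : ContinuousOn r (Set.Ioc 0 T))
    (hr_int : ∀ t ∈ Set.Ioc 0 T,
      IntegrableOn (fun s => (t - s) ^ (α - 1) * mittagLeffler α α (-lam * (t - s) ^ α) * r s)
        (Set.Ioo 0 t))
    (hres : ∀ t ∈ Set.Ioc 0 T,
      (1 / Real.Gamma (1 - α)) *
          ⟪(t ^ (-α) • d + ∫ s in Set.Ioo 0 t, (t - s) ^ (-α) • ebar' s), e t⟫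
        + lam * ‖e t‖ ^ 2 ≤ r t * ‖e t‖) :
    ∀ t ∈ Set.Ioc 0 T,
      ‖e t‖ ≤ ∫ s in Set.Ioo 0 t,
        (t - s) ^ (α - 1) * mittagLeffler α α (-lam * (t - s) ^ α) * r s := by
  obtain ⟨h0, h1⟩ := hα
  intro t htT
  have ht : 0 < t := htT.1
  have hG : 0 < Real.Gamma (1 - α) := Real.Gamma_pos_of_pos (by linarith)
  have hsubT : Set.Ioo 0 t ⊆ Set.Ioo 0 T := Set.Ioo_subset_Ioo_right htT.2
  -- integrability of the derivative
  have hmeas : ∀ x ∈ Set.Ioc 0 T, AEStronglyMeasurable ebar' (volume.restrict (Set.Ioo 0 x)) := by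
    intro x hx
    refine (aestronglyMeasurable_deriv ebar _).congr ?_
    refine (ae_restrict_iff' measurableSet_Ioo).2 (Filter.Eventually.of_forall fun s hs => ?_)
    exact (hderiv s ⟨hs.1, hs.2.trans_le hx.2⟩).deriv
  have hj : ∀ x ∈ Set.Ioc 0 T,
      IntegrableOn (fun s => (x - s) ^ (-α) • ebar' s) (Set.Ioo 0 x) := by
    intro x hx
    refine (hint x hx).mono' ?_ ?_
    · exact AEStronglyMeasurable.smul (Measurable.aestronglyMeasurable (by fun_prop)) (hmeas x hx)
    · refine (ae_restrict_iff' measurableSet_Ioo).2 (Filter.Eventually.of_forall fun s hs => ?_)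
      rw [norm_smul, Real.norm_of_nonneg (Real.rpow_nonneg (by linarith [hs.2]) _)]
  have hi : ∀ x ∈ Set.Ioc 0 T, IntegrableOn ebar' (Set.Ioo 0 x) := by
    intro x hx
    refine ((hint x hx).const_mul (x ^ α)).mono' (hmeas x hx) ?_
    refine (ae_restrict_iff' measurableSet_Ioo).2 (Filter.Eventually.of_forall fun s hs => ?_)
    have hx0 := hx.1
    have a1 : x ^ (-α) ≤ (x - s) ^ (-α) :=
      Real.rpow_le_rpow_of_nonpos (by linarith [hs.2]) (by linarith [hs.1]) (by linarith)
    have a2 : x ^ α * x ^ (-α) = 1 := by rw [← Real.rpow_add hx0]; simp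
    calc ‖ebar' s‖ = x ^ α * x ^ (-α) * ‖ebar' s‖ := by rw [a2, one_mul]
      _ ≤ x ^ α * (x - s) ^ (-α) * ‖ebar' s‖ := by gcongr
      _ = _ := by ring
  set K := mlK α lam with hKdef
  have hKm : Measurable K := mlK_measurable h0 h1 lam
  have hKpos : ∀ x, 0 < x → 0 < K x := fun x hx => mlK_pos h0 h1 hx
  have iK : ∀ x, 0 < x → IntegrableOn (fun s => K (x - s)) (Set.Ioo 0 x) := fun x hx =>
    mlK_int h0 h1 hx
  have iKa : ∀ x, 0 < x → IntegrableOn (fun s => K (x - s) * s ^ (-α)) (Set.Ioo 0 x) :=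
    fun x hx => mlK_int_a h0 h1 hx
  have res : ∀ x, 0 < x → (∫ s in Set.Ioo 0 x, K (x - s) * s ^ (-α))
      + Real.Gamma (1 - α) * lam * (∫ s in Set.Ioo 0 x, K (x - s)) = Real.Gamma (1 - α) :=
    fun x hx => mlK_resolvent h0 h1 hx
  set g := Real.Gamma (1 - α) with hg
  have iKc : ∀ c : ℝ, ∀ x, 0 < x →
      IntegrableOn (fun s => K (x - s) * (s ^ (-α) / g + c)) (Set.Ioo 0 x) := by
    intro c x hx
    have := ((iKa x hx).mul_const (1 / g)).add ((iK x hx).mul_const c)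
    refine this.congr (Filter.Eventually.of_forall fun s => ?_)
    simp only [Pi.add_apply]
    ring
  have vKc : ∀ c : ℝ, ∀ x, 0 < x → ∫ s in Set.Ioo 0 x, K (x - s) * (s ^ (-α) / g + c)
      = 1 + (c - lam) * ∫ s in Set.Ioo 0 x, K (x - s) := by
    intro c x hx
    have e : ∫ s in Set.Ioo 0 x, K (x - s) * (s ^ (-α) / g + c)
        = ∫ s in Set.Ioo 0 x, (K (x - s) * s ^ (-α) * (1 / g) + K (x - s) * c) := by
      congr 1; funext s; ring
    rw [e, integral_add ((iKa x hx).mul_const _) ((iK x hx).mul_const _), integral_mul_const,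
      integral_mul_const]
    have := res x hx
    have h3 : ∫ s in Set.Ioo 0 x, K (x - s) * s ^ (-α)
        = g - g * lam * ∫ s in Set.Ioo 0 x, K (x - s) := by linarith
    rw [h3]
    field_simp
    ring
  set A := ∫ s in Set.Ioo 0 t, K (t - s) * (s ^ (-α) / g + |lam|) with hA
  set B := ∫ s in Set.Ioo 0 t,
        (t - s) ^ (α - 1) * mittagLeffler α α (-lam * (t - s) ^ α) * r s with hB
  -- the main estimate for the regularised norm
  have main : ∀ δ : ℝ, 0 < δ → ‖e t‖ ≤ B + δ * A := by
    intro δ hδ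
    set v : ℝ → ℝ := fun s => √(‖ebar s‖ ^ 2 + δ ^ 2) with hv
    set v' : ℝ → ℝ := fun s => ⟪ebar s, ebar' s⟫ / v s with hv'
    have hvpos : ∀ s, 0 < v s := fun s => by simp only [hv]; positivity
    have hvn : ∀ s, ‖ebar s‖ ≤ v s := fun s => by
      simp only [hv]
      apply Real.le_sqrt_of_sq_le
      nlinarith
    have hvd : ∀ s ∈ Set.Ioo 0 T, HasDerivAt v (v' s) s := by
      intro s hs
      have a1 := ((hderiv s hs).norm_sq.add_const (δ ^ 2)).sqrt (by positivity)
      refine HasDerivAt.congr_deriv a1 ?_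
      simp only [hv', hv]
      field_simp
    have hvc : ContinuousOn v (Set.Icc 0 T) :=
      ((hebar_cont.norm.pow 2).add continuousOn_const).sqrt
    have hv'le : ∀ s, ‖v' s‖ ≤ ‖ebar' s‖ := by
      intro s
      simp only [hv']
      rw [norm_div, Real.norm_of_nonneg (hvpos s).le, div_le_iff₀ (hvpos s)]
      refine (norm_inner_le_norm _ _).trans ?_
      rw [mul_comm]
      gcongr
      exact hvn s
    have hv'm : ∀ x ∈ Set.Ioc 0 T, AEStronglyMeasurable v' (volume.restrict (Set.Ioo 0 x)) := by
      intro x hx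
      refine (aestronglyMeasurable_deriv v _).congr ?_
      refine (ae_restrict_iff' measurableSet_Ioo).2 (Filter.Eventually.of_forall fun s hs => ?_)
      exact (hvd s ⟨hs.1, hs.2.trans_le hx.2⟩).deriv
    have hv'i : ∀ x ∈ Set.Ioc 0 T, IntegrableOn v' (Set.Ioo 0 x) := fun x hx =>
      (hi x hx).norm.mono' (hv'm x hx) (Filter.Eventually.of_forall hv'le)
    have hv'j : ∀ x ∈ Set.Ioc 0 T, IntegrableOn (fun s => (x - s) ^ (-α) * v' s) (Set.Ioo 0 x) := by
      intro x hx
      refine (hint x hx).mono' ?_ ?_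
      · exact AEStronglyMeasurable.mul (Measurable.aestronglyMeasurable (by fun_prop)) (hv'm x hx)
      · refine (ae_restrict_iff' measurableSet_Ioo).2 (Filter.Eventually.of_forall fun s hs => ?_)
        have : 0 ≤ (x - s) ^ (-α) := Real.rpow_nonneg (by linarith [hs.2]) _
        rw [norm_mul, Real.norm_of_nonneg this]
        exact mul_le_mul_of_nonneg_left (hv'le s) this
    have hvint : ∀ x ∈ Set.Ioc 0 T, ∫ s in Set.Ioo 0 x, v' s = v x - v 0 := by
      intro x hx
      rw [← integral_Ioc_eq_integral_Ioo, ← intervalIntegral.integral_of_le hx.1.le]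
      refine intervalIntegral.integral_eq_sub_of_hasDerivAt_of_le hx.1.le
        (hvc.mono (Set.Icc_subset_Icc_right hx.2))
        (fun s hs => hvd s ⟨hs.1, hs.2.trans_le hx.2⟩) ?_
      rw [intervalIntegrable_iff_integrableOn_Ioc_of_le hx.1.le,
        integrableOn_Ioc_iff_integrableOn_Ioo]
      exact hv'i x hx
    have fub := ml_fubini (K := K) (G := fun y => y ^ (-α) / g + lam) (u := v') (t := t)
      (A := A) hKm (by fun_prop) (hv'i t htT) (fun x hx => iKc lam x hx.1)
      (fun x hx => by
        have hle : ∫ y in Set.Ioo 0 x, ‖K (x - y) * (y ^ (-α) / g + lam)‖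
            ≤ ∫ y in Set.Ioo 0 x, K (x - y) * (y ^ (-α) / g + |lam|) := by
          refine setIntegral_mono_on (iKc lam x hx.1).norm (iKc |lam| x hx.1) measurableSet_Ioo ?_
          intro y hy
          have hk := hKpos (x - y) (by linarith [hy.2])
          have hy0 := hy.1
          rw [norm_mul, Real.norm_of_nonneg hk.le]
          gcongr
          refine (norm_add_le _ _).trans ?_
          rw [Real.norm_of_nonneg (by positivity), Real.norm_eq_abs]
        refine hle.trans ?_
        rw [hA, vKc |lam| x hx.1, vKc |lam| t ht, ml_flip K hx.1, ml_flip K ht]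
        have : 0 ≤ |lam| - lam := by linarith [le_abs_self lam]
        gcongr 1 + (|lam| - lam) * ?_
        refine setIntegral_mono_set (mlK_int' h0 h1 ht) ?_ ?_
        · refine (ae_restrict_iff' measurableSet_Ioo).2 (Filter.Eventually.of_forall fun s hs => ?_)
          exact (hKpos s hs.1).le
        · exact (Set.Ioo_subset_Ioo_right hx.2).eventuallyLE)
      (fun x hx => by rw [vKc lam x hx.1]; simp)
    obtain ⟨fi, fv⟩ := fub
    rw [hvint t htT] at fv
    -- pointwise bound
    have hpt : ∀ s ∈ Set.Ioo 0 t, (s ^ (-α) / g + lam) * v 0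
        + ∫ σ in Set.Ioo 0 s, ((s - σ) ^ (-α) / g + lam) * v' σ
        ≤ r s + δ * (s ^ (-α) / g + |lam|) := by
      intro s hs
      have hsT : s ∈ Set.Ioc 0 T := ⟨hs.1, hs.2.le.trans htT.2⟩
      have hr' := hres s hsT
      rw [he s hsT, ← hebar0] at hr'
      have hb := ml_reg_bound (v := v) (v' := v') h0 h1 hs.1 hδ
        (hebar_cont.mono (Set.Icc_subset_Icc_right hsT.2))
        (fun σ hσ => hderiv σ ⟨hσ.1, hσ.2.trans_le hsT.2⟩) (fun _ => rfl)
        (fun σ hσ => hvd σ ⟨hσ.1, hσ.2.trans_le hsT.2⟩)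
        (hi s hsT) (hv'i s hsT) (hj s hsT) (hv'j s hsT) (hr_nonneg s hsT) hr'
      refine le_trans (le_of_eq ?_) hb
      have e : ∫ σ in Set.Ioo 0 s, ((s - σ) ^ (-α) / g + lam) * v' σ
          = ∫ σ in Set.Ioo 0 s, ((1 / g) * ((s - σ) ^ (-α) * v' σ) + lam * v' σ) := by
        congr 1; funext σ; ring
      rw [e, integral_add ((hv'j s hsT).const_mul _) ((hv'i s hsT).const_mul _),
        integral_const_mul, integral_const_mul, hvint s hsT]
      ring
    have iL : IntegrableOn (fun s => K (t - s) * ((s ^ (-α) / g + lam) * v 0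
        + ∫ σ in Set.Ioo 0 s, ((s - σ) ^ (-α) / g + lam) * v' σ)) (Set.Ioo 0 t) := by
      refine (((iKc lam t ht).mul_const (v 0)).add fi).congr (Filter.Eventually.of_forall fun s => ?_)
      simp only [Pi.add_apply]
      ring
    have vL : ∫ s in Set.Ioo 0 t, K (t - s) * ((s ^ (-α) / g + lam) * v 0
        + ∫ σ in Set.Ioo 0 s, ((s - σ) ^ (-α) / g + lam) * v' σ) = v t := by
      have e : ∫ s in Set.Ioo 0 t, K (t - s) * ((s ^ (-α) / g + lam) * v 0
          + ∫ σ in Set.Ioo 0 s, ((s - σ) ^ (-α) / g + lam) * v' σ)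
          = ∫ s in Set.Ioo 0 t, (K (t - s) * (s ^ (-α) / g + lam) * v 0
          + K (t - s) * ∫ σ in Set.Ioo 0 s, ((s - σ) ^ (-α) / g + lam) * v' σ) := by
        congr 1; funext s; ring
      rw [e, integral_add ((iKc lam t ht).mul_const (v 0)) fi, fv, integral_mul_const,
        vKc lam t ht]
      ring
    have iR : IntegrableOn (fun s => K (t - s) * r s) (Set.Ioo 0 t) := hr_int t htT
    have iR2 : IntegrableOn (fun s => K (t - s) * r s + δ * (K (t - s) * (s ^ (-α) / g + |lam|)))
      (Set.Ioo 0 t) := iR.add ((iKc |lam| t ht).const_mul δ)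
    have vR : ∫ s in Set.Ioo 0 t, (K (t - s) * r s + δ * (K (t - s) * (s ^ (-α) / g + |lam|)))
        = B + δ * A := by
      rw [integral_add iR ((iKc |lam| t ht).const_mul δ), integral_const_mul]
      rfl
    rw [he t htT]
    refine (hvn t).trans ?_
    rw [← vL, ← vR]
    refine setIntegral_mono_on iL iR2 measurableSet_Ioo fun s hs => ?_
    have hk := hKpos (t - s) (by linarith [hs.2])
    calc _ ≤ K (t - s) * (r s + δ * (s ^ (-α) / g + |lam|)) :=
          mul_le_mul_of_nonneg_left (hpt s hs) hk.le
      _ = _ := by ring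
  have lim : Filter.Tendsto (fun δ : ℝ => B + δ * A) (nhdsWithin 0 (Set.Ioi 0)) (nhds B) := by
    have : Continuous (fun δ : ℝ => B + δ * A) := by fun_prop
    simpa using (this.tendsto 0).mono_left (nhdsWithin_le_nhds (s := Set.Ioi 0))
  refine ge_of_tendsto lim ?_
  filter_upwards [self_mem_nhdsWithin] with δ hδ
  exact main δ hδ
end

section
/- Let α ∈ (0,1) and t > 0. Let φ : [0,t] → ℝ be continuous, differentiable on (0,t), with s ↦ (t−s)^{−α}|φ′(s)| integrable on (0,t). If φ(s) ≤ φ(t) for all s ∈ [0,t] (i.e., φ attains its maximum over [0,t] at the endpoint t), then ∫_0^t (t−s)^{−α} φ′(s) ds ≥ 0; that is, the Caputo fractional derivative D_t^α φ(t) = (1/Γ(1−α)) ∫_0^t (t−s)^{−α} φ′(s) ds is nonnegative. -/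
open MeasureTheory Real

/-- Extremum principle for the Caputo fractional derivative: if `φ` attains its
maximum over `[0,t]` at the endpoint `t`, then
`Γ(1-α) D_t^α φ(t) = ∫_0^t (t-s)^(-α) φ'(s) ds ≥ 0`. -/
theorem caputo_nonneg_at_max (α t : ℝ) (hα : α ∈ Set.Ioo (0 : ℝ) 1) (ht : 0 < t)
    (φ φ' : ℝ → ℝ)
    (hcont : ContinuousOn φ (Set.Icc 0 t))
    (hderiv : ∀ s ∈ Set.Ioo 0 t, HasDerivAt φ (φ' s) s)
    (hint : IntegrableOn (fun s => (t - s) ^ (-α) * |φ' s|) (Set.Ioo 0 t))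
    (hmax : ∀ s ∈ Set.Icc 0 t, φ s ≤ φ t) :
    0 ≤ ∫ s in Set.Ioo 0 t, (t - s) ^ (-α) * φ' s := by
  obtain ⟨hα0, hα1⟩ := hα
  have hmeas : AEStronglyMeasurable φ' (volume.restrict (Set.Ioo 0 t)) := by
    refine (measurable_deriv φ).aestronglyMeasurable.congr ?_
    filter_upwards [ae_restrict_mem measurableSet_Ioo] with s hs using (hderiv s hs).deriv
  have hφ'int : IntegrableOn φ' (Set.Ioo 0 t) := by
    refine Integrable.mono' (hint.const_mul (t ^ α)) hmeas ?_
    filter_upwards [ae_restrict_mem measurableSet_Ioo] with s hs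
    have h1 : 0 < t - s := sub_pos.2 hs.2
    have h2 : (t - s) ^ α ≤ t ^ α :=
      Real.rpow_le_rpow h1.le (by linarith [hs.1]) hα0.le
    have h3 : (t - s) ^ α * (t - s) ^ (-α) = 1 := by
      rw [← Real.rpow_add h1]; simp
    have h4 : 0 ≤ (t - s) ^ (-α) * |φ' s| := by positivity
    calc ‖φ' s‖ = ((t - s) ^ α * (t - s) ^ (-α)) * |φ' s| := by
          rw [h3, one_mul, Real.norm_eq_abs]
      _ = (t - s) ^ α * ((t - s) ^ (-α) * |φ' s|) := by ring
      _ ≤ _ := mul_le_mul_of_nonneg_right h2 h4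
  have hII : IntervalIntegrable φ' volume 0 t := by
    rw [intervalIntegrable_iff_integrableOn_Ioo_of_le ht.le]; exact hφ'int
  -- regularised inequality
  have key : ∀ ε : ℝ, 0 < ε → 0 ≤ ∫ s in Set.Ioo 0 t, (t - s + ε) ^ (-α) * φ' s := by
    intro ε hε
    have hpos : ∀ s ∈ Set.Icc 0 t, 0 < t - s + ε := fun s hs => by linarith [hs.2]
    have hk : ∀ s ∈ Set.Icc 0 t,
        HasDerivAt (fun s => (t - s + ε) ^ (-α)) (α * (t - s + ε) ^ (-α - 1)) s := by
      intro s hs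
      have h := (((hasDerivAt_id s).const_sub t).add_const ε).rpow_const (p := -α)
        (Or.inl (hpos s hs).ne')
      simpa using h
    have hk'c : ContinuousOn (fun s => α * (t - s + ε) ^ (-α - 1)) (Set.Icc 0 t) := by
      refine continuousOn_const.mul (ContinuousOn.rpow_const (by fun_prop) ?_)
      exact fun s hs => Or.inl (hpos s hs).ne'
    have parts := intervalIntegral.integral_mul_deriv_eq_deriv_mul_of_hasDerivAt
      (a := 0) (b := t) (u := fun s => (t - s + ε) ^ (-α))
      (u' := fun s => α * (t - s + ε) ^ (-α - 1))
      (v := fun s => φ s - φ t) (v' := φ')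
      (by rw [Set.uIcc_of_le ht.le]
          exact fun s hs => (hk s hs).continuousAt.continuousWithinAt)
      (by rw [Set.uIcc_of_le ht.le]; exact hcont.sub continuousOn_const)
      (by rw [min_eq_left ht.le, max_eq_right ht.le]
          exact fun s hs => hk s (Set.Ioo_subset_Icc_self hs))
      (by rw [min_eq_left ht.le, max_eq_right ht.le]
          exact fun s hs => (hderiv s hs).sub_const _)
      (by apply ContinuousOn.intervalIntegrable; rwa [Set.uIcc_of_le ht.le])
      hII
    rw [← integral_Ioc_eq_integral_Ioo, ← intervalIntegral.integral_of_le ht.le, parts]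
    have hI : 0 ≤ ∫ s in (0:ℝ)..t, -((α * (t - s + ε) ^ (-α - 1)) * (φ s - φ t)) := by
      refine intervalIntegral.integral_nonneg ht.le fun s hs => ?_
      have h1 := Real.rpow_pos_of_pos (hpos s hs) (-α - 1)
      have h2 := hmax s hs
      have h3 : 0 ≤ α * (t - s + ε) ^ (-α - 1) := by positivity
      nlinarith
    rw [intervalIntegral.integral_neg] at hI
    have h0 : (0:ℝ) ∈ Set.Icc 0 t := ⟨le_rfl, ht.le⟩
    have h1 := Real.rpow_pos_of_pos (hpos 0 h0) (-α)
    have h2 := hmax 0 h0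
    have h3 : (t - 0 + ε) ^ (-α) * (φ 0 - φ t) ≤ 0 :=
      mul_nonpos_of_nonneg_of_nonpos h1.le (by linarith)
    simp only [sub_self, mul_zero]
    simp only [sub_zero] at h3 ⊢
    linarith
  -- limit
  have hε : Filter.Tendsto (fun n : ℕ => 1 / ((n : ℝ) + 1)) Filter.atTop (nhds 0) :=
    tendsto_one_div_add_atTop_nhds_zero_nat
  have lim := tendsto_integral_of_dominated_convergence
    (μ := volume.restrict (Set.Ioo 0 t))
    (F := fun (n : ℕ) s => (t - s + 1 / ((n : ℝ) + 1)) ^ (-α) * φ' s)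
    (f := fun s => (t - s) ^ (-α) * φ' s)
    (fun s => (t - s) ^ (-α) * |φ' s|)
    (fun n => (by fun_prop : Measurable
      (fun s : ℝ => (t - s + 1 / ((n : ℝ) + 1)) ^ (-α))).aestronglyMeasurable.mul hmeas)
    hint
    (fun n => by
      filter_upwards [ae_restrict_mem measurableSet_Ioo] with s hs
      have h1 : 0 < t - s := sub_pos.2 hs.2
      have h2 : 0 < 1 / ((n : ℝ) + 1) := by positivity
      rw [norm_mul, Real.norm_eq_abs, Real.norm_eq_abs,
        abs_of_pos (Real.rpow_pos_of_pos (by linarith) _)]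
      exact mul_le_mul_of_nonneg_right
        (Real.rpow_le_rpow_of_nonpos h1 (by linarith) (by linarith)) (abs_nonneg _))
    (by
      filter_upwards [ae_restrict_mem measurableSet_Ioo] with s hs
      have h1 : 0 < t - s := sub_pos.2 hs.2
      have h2 : Filter.Tendsto (fun n : ℕ => t - s + 1 / ((n : ℝ) + 1)) Filter.atTop
          (nhds (t - s)) := by simpa using hε.const_add (t - s)
      exact (h2.rpow_const (Or.inl h1.ne')).mul_const _)
  exact ge_of_tendsto' lim fun n => key _ (by positivity)
end

section
/- Let d ≥ 1, let Ω ⊂ ℝ^d be a bounded open set, T > 0, and α ∈ (0,1). For k = 1,…,d let a_k, b_k, c : closure(Ω) → ℝ be continuous functions with a_k(x) > 0 and c(x) ≥ 0 for all x ∈ closure(Ω). Let v : closure(Ω) × [0,T] → ℝ be continuous; assume that for each t ∈ (0,T] the function x ↦ v(x,t) is twice continuously differentiable on Ω, and that for each x ∈ Ω the function t ↦ v(x,t) is Lipschitz continuous on [ε, T] for every ε ∈ (0,T). Assume v(x,0) ≥ 0 for all x ∈ closure(Ω), v(x,t) ≥ 0 for all x ∈ ∂Ω and t ∈ [0,T],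 and that for all x ∈ Ω and t ∈ (0,T]: (1/Γ(1−α)) ( t^{−α}(v(x,t) − v(x,0)) + ∫_0^t α (t−s)^{−α−1} (v(x,t) − v(x,s)) ds ) + ∑_{k=1}^d ( −a_k(x) ∂²v/∂x_k²(x,t) + b_k(x) ∂v/∂x_k(x,t) ) + c(x) v(x,t) ≥ 0. Then v(x,t) ≥ 0 for all (x,t) ∈ closure(Ω) × [0,T]. -/
open MeasureTheory Real

/-- The Caputo fractional derivative of order `α` of a scalar function `w` of time,
in the integrated-by-parts form
`Γ(1-α) D_t^α w(t) = t^(-α)(w(t) - w(0)) + ∫_0^t α (t-s)^(-α-1) (w(t) - w(s)) ds`. -/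
noncomputable def fracDer (α : ℝ) (w : ℝ → ℝ) (t : ℝ) : ℝ :=
  (1 / Real.Gamma (1 - α)) * (t ^ (-α) * (w t - w 0)
    + ∫ s in Set.Ioo 0 t, α * (t - s) ^ (-α - 1) * (w t - w s))

/-- The elliptic operator `𝓛w = ∑_k (-a_k ∂²_{x_k} w + b_k ∂_{x_k} w) + c w`. -/
noncomputable def ellOp {d : ℕ} (a b : Fin d → (Fin d → ℝ) → ℝ) (c : (Fin d → ℝ) → ℝ)
    (w : (Fin d → ℝ) → ℝ) (x : Fin d → ℝ) : ℝ :=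
  (∑ k, (-(a k x) * fderiv ℝ (fun y => fderiv ℝ w y (Pi.single k 1)) x (Pi.single k 1)
      + b k x * fderiv ℝ w x (Pi.single k 1))) + c x * w x

theorem second_deriv_nonneg_of_isLocalMin (g : ℝ → ℝ) (x : ℝ) (hg : IsLocalMin g x)
    (hc : ContinuousAt g x) : 0 ≤ deriv (deriv g) x := by
  by_contra h
  push Not at h
  have h1 : deriv g x = 0 := hg.deriv_eq_zero
  have hmax : IsLocalMax g x := isLocalMax_of_deriv_deriv_neg h h1 hc
  have heq : g =ᶠ[nhds x] fun _ => g x := by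
    filter_upwards [hg, hmax] with y h2 h3
    exact le_antisymm h3 h2
  have h4 : deriv (deriv g) x = 0 := by
    rw [heq.deriv.deriv_eq]
    simp
  linarith

theorem second_partial_nonneg {d : ℕ} (w : (Fin d → ℝ) → ℝ) (x e : Fin d → ℝ)
    (hw : ContDiffAt ℝ 2 w x) (hmin : IsLocalMin w x) :
    0 ≤ fderiv ℝ (fun y => fderiv ℝ w y e) x e := by
  have hl : ∀ s : ℝ, HasDerivAt (fun s : ℝ => x + s • e) e s := fun s => by
    simpa using ((hasDerivAt_id s).smul_const e).const_add x
  have hl0 : x + (0 : ℝ) • e = x := by simp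
  have hlc : Filter.Tendsto (fun s : ℝ => x + s • e) (nhds 0) (nhds x) := by
    have := (hl 0).continuousAt.tendsto
    rwa [hl0] at this
  have hd : ∀ᶠ y in nhds x, DifferentiableAt ℝ w y := by
    filter_upwards [hw.eventually (by simp)] with y hy
    exact hy.differentiableAt (by simp)
  have hd1 : (deriv fun s : ℝ => w (x + s • e)) =ᶠ[nhds 0]
      fun s => fderiv ℝ w (x + s • e) e := by
    filter_upwards [hlc.eventually hd] with s hs
    exact (hs.hasFDerivAt.comp_hasDerivAt s (hl s)).deriv
  have hf : DifferentiableAt ℝ (fun y => fderiv ℝ w y e) x := by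
    have h1 : DifferentiableAt ℝ (fderiv ℝ w) x :=
      (hw.fderiv_right (m := 1) (by norm_num)).differentiableAt (by simp)
    exact h1.clm_apply (differentiableAt_const e)
  have hd2 : deriv (deriv fun s : ℝ => w (x + s • e)) 0
      = fderiv ℝ (fun y => fderiv ℝ w y e) x e := by
    rw [hd1.deriv_eq]
    have hf' := hf.hasFDerivAt
    exact (HasFDerivAt.comp_hasDerivAt (f := fun s : ℝ => x + s • e) (0 : ℝ)
      (by rw [hl0]; exact hf') (hl 0)).deriv
  rw [← hd2]
  apply second_deriv_nonneg_of_isLocalMin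
  · have h5 : ∀ᶠ s : ℝ in nhds 0, w x ≤ w (x + s • e) := hlc.eventually hmin
    filter_upwards [h5] with s hs
    simpa using hs
  · have : ContinuousAt w (x + (0 : ℝ) • e) := by rw [hl0]; exact hw.continuousAt
    exact ContinuousAt.comp (f := fun s : ℝ => x + s • e) this (hl 0).continuousAt

/-- Maximum/comparison principle for the time-fractional parabolic operator
`D_t^α + 𝓛` (Lemma 3.1): `(D_t^α + 𝓛)v ≥ 0` in `Ω × (0,T]` together with `v ≥ 0`
on the parabolic boundary implies `v ≥ 0` everywhere. -/
theorem fractional_parabolic_maximum_principle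
    (d : ℕ) (hd : 1 ≤ d) (Ω : Set (Fin d → ℝ)) (hΩo : IsOpen Ω)
    (hΩb : Bornology.IsBounded Ω)
    (T α : ℝ) (hT : 0 < T) (hα : α ∈ Set.Ioo (0 : ℝ) 1)
    (a b : Fin d → (Fin d → ℝ) → ℝ) (c : (Fin d → ℝ) → ℝ)
    (ha_cont : ∀ k, ContinuousOn (a k) (closure Ω))
    (hb_cont : ∀ k, ContinuousOn (b k) (closure Ω))
    (hc_cont : ContinuousOn c (closure Ω))
    (ha_pos : ∀ k, ∀ x ∈ closure Ω, 0 < a k x)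
    (hc_nonneg : ∀ x ∈ closure Ω, 0 ≤ c x)
    (v : (Fin d → ℝ) → ℝ → ℝ)
    (hv_cont : ContinuousOn (fun p : (Fin d → ℝ) × ℝ => v p.1 p.2)
      (closure Ω ×ˢ Set.Icc 0 T))
    (hv_x : ∀ t ∈ Set.Ioc 0 T, ContDiffOn ℝ 2 (fun x => v x t) Ω)
    (hv_t : ∀ x ∈ Ω, ∀ ε ∈ Set.Ioo 0 T, ∃ K : NNReal, LipschitzOnWith K (v x) (Set.Icc ε T))
    (hv0 : ∀ x ∈ closure Ω, 0 ≤ v x 0)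
    (hvbd : ∀ x ∈ frontier Ω, ∀ t ∈ Set.Icc 0 T, 0 ≤ v x t)
    (hineq : ∀ x ∈ Ω, ∀ t ∈ Set.Ioc 0 T,
      0 ≤ fracDer α (v x) t + ellOp a b c (fun y => v y t) x) :
    ∀ x ∈ closure Ω, ∀ t ∈ Set.Icc 0 T, 0 ≤ v x t := by
  intro x hx t ht
  by_contra hneg
  push Not at hneg
  have hK : IsCompact (closure Ω ×ˢ Set.Icc 0 T) :=
    hΩb.isCompact_closure.prod isCompact_Icc
  obtain ⟨⟨x0, t0⟩, ⟨hx0, ht0⟩, hmin⟩ := hK.exists_isMinOn ⟨(x, t), hx, ht⟩ hv_cont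
  have hmin' : ∀ y ∈ closure Ω, ∀ s ∈ Set.Icc 0 T, v x0 t0 ≤ v y s :=
    fun y hy s hs => hmin (show (y, s) ∈ closure Ω ×ˢ Set.Icc 0 T from ⟨hy, hs⟩)
  have hm : v x0 t0 < 0 := (hmin' x hx t ht).trans_lt hneg
  simp only at hx0 ht0
  have ht0pos : 0 < t0 := by
    rcases ht0.1.eq_or_lt with h | h
    · rw [← h] at hm
      exact absurd (hv0 x0 hx0) (not_le.mpr hm)
    · exact h
  have hxΩ : x0 ∈ Ω := by
    by_contra h
    have : x0 ∈ frontier Ω := by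
      rw [hΩo.frontier_eq]
      exact ⟨hx0, h⟩
    exact absurd (hvbd x0 this t0 ht0) (not_le.mpr hm)
  have hnhds : Ω ∈ nhds x0 := hΩo.mem_nhds hxΩ
  have hloc : IsLocalMin (fun y => v y t0) x0 := by
    filter_upwards [hnhds] with y hy
    exact hmin' y (subset_closure hy) t0 ht0
  have hC : ContDiffAt ℝ 2 (fun y => v y t0) x0 := (hv_x t0 ⟨ht0pos, ht0.2⟩).contDiffAt hnhds
  have hell : ellOp a b c (fun y => v y t0) x0 ≤ 0 := by
    unfold ellOp
    have h1 : ∀ k ∈ Finset.univ, (-(a k x0) * fderiv ℝ (fun y => fderiv ℝ (fun y => v y t0) y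
        (Pi.single k 1)) x0 (Pi.single k 1)
        + b k x0 * fderiv ℝ (fun y => v y t0) x0 (Pi.single k 1)) ≤ 0 := by
      intro k _
      rw [hloc.fderiv_eq_zero]
      have := mul_nonneg (ha_pos k x0 hx0).le
        (second_partial_nonneg (fun y => v y t0) x0 (Pi.single k 1) hC hloc)
      simp only [zero_apply, mul_zero, add_zero]
      linarith
    have h2 := Finset.sum_nonpos h1
    have h3 := mul_nonpos_of_nonneg_of_nonpos (hc_nonneg x0 hx0) hm.le
    exact add_nonpos h2 h3
  have hfrac : fracDer α (v x0) t0 < 0 := by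
    unfold fracDer
    have hG : 0 < 1 / Real.Gamma (1 - α) :=
      one_div_pos.mpr (Real.Gamma_pos_of_pos (by linarith [hα.2]))
    have h1 : t0 ^ (-α) * (v x0 t0 - v x0 0) < 0 :=
      mul_neg_of_pos_of_neg (Real.rpow_pos_of_pos ht0pos _) (by linarith [hv0 x0 hx0])
    have h2 : ∫ s in Set.Ioo 0 t0, α * (t0 - s) ^ (-α - 1) * (v x0 t0 - v x0 s) ≤ 0 := by
      apply setIntegral_nonpos measurableSet_Ioo
      intro s hs
      apply mul_nonpos_of_nonneg_of_nonpos
      · exact mul_nonneg hα.1.le (Real.rpow_nonneg (by linarith [hs.2]) _)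
      · linarith [hmin' x0 hx0 s ⟨hs.1.le, hs.2.le.trans ht0.2⟩]
    exact mul_neg_of_pos_of_neg hG (by linarith)
  linarith [hineq x0 hxΩ t0 ⟨ht0pos, ht0.2⟩]
end

section
/- Let α ∈ (0,1), λ ∈ ℝ, T > 0, and let v : [0,T] → ℝ be continuous. Define w(0) := 0 and w(t) := ∫_0^t (t−s)^{α−1} E_{α,α}(−λ(t−s)^α) v(s) ds for t ∈ (0,T]. Then w is continuous on [0,T] and satisfies, for every t ∈ [0,T], the Volterra integral equation w(t) + (λ/Γ(α)) ∫_0^t (t−s)^{α−1} w(s) ds = (1/Γ(α)) ∫_0^t (t−s)^{α−1} v(s) ds. -/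
open MeasureTheory Real

theorem aux_gamma_lower (x c : ℝ) (hx : 1 ≤ x) (hc : 0 < c) :
    c ^ (x - 1) * Real.exp (-(c + 1)) ≤ Real.Gamma x := by
  have hx0 : 0 < x := by linarith
  rw [Real.Gamma_eq_integral hx0]
  have hint := Real.GammaIntegral_convergent hx0
  have hsub : Set.Ioc c (c + 1) ⊆ Set.Ioi (0 : ℝ) := fun y hy => hc.trans hy.1
  calc c ^ (x - 1) * Real.exp (-(c + 1))
      = ∫ _ in Set.Ioc c (c + 1), c ^ (x - 1) * Real.exp (-(c + 1)) := by
        simp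
    _ ≤ ∫ t in Set.Ioc c (c + 1), Real.exp (-t) * t ^ (x - 1) := by
        apply setIntegral_mono_on
        · exact integrableOn_const (by simp)
        · exact hint.mono_set hsub
        · exact measurableSet_Ioc
        · intro t ht
          rw [mul_comm]
          have h1 : c ^ (x - 1) ≤ t ^ (x - 1) :=
            Real.rpow_le_rpow hc.le ht.1.le (by linarith)
          have h2 : Real.exp (-(c + 1)) ≤ Real.exp (-t) :=
            Real.exp_le_exp.2 (by linarith [ht.2])
          have h3 : 0 ≤ c ^ (x - 1) := Real.rpow_nonneg hc.le _
          gcongr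
    _ ≤ ∫ t in Set.Ioi 0, Real.exp (-t) * t ^ (x - 1) := by
        apply setIntegral_mono_set hint
        · filter_upwards [ae_restrict_mem measurableSet_Ioi] with t ht
          have : (0 : ℝ) < t := ht
          simp only [Pi.zero_apply]
          positivity
        · exact hsub.eventuallyLE

theorem aux_summable (a b R : ℝ) (ha : 0 < a) (hb : 0 < b) (hR : 0 ≤ R) :
    Summable fun k : ℕ => R ^ k / Real.Gamma (a * k + b) := by
  obtain ⟨c, hc, hca⟩ : ∃ c : ℝ, 0 < c ∧ c ^ a = 2 * (R + 1) := by
    refine ⟨(2 * (R + 1)) ^ (1 / a), by positivity, ?_⟩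
    rw [← Real.rpow_mul (by positivity), one_div_mul_cancel ha.ne', Real.rpow_one]
  have hs : Summable fun k : ℕ => (Real.exp (c + 1) * c ^ (1 - b)) * (1 / 2 : ℝ) ^ k :=
    (summable_geometric_of_lt_one (by norm_num) (by norm_num)).mul_left _
  refine Summable.of_norm_bounded_eventually_nat hs ?_
  have hlim : Filter.Tendsto (fun k : ℕ => a * (k : ℝ) + b) Filter.atTop Filter.atTop :=
    Filter.tendsto_atTop_add_const_right _ _
      (tendsto_natCast_atTop_atTop.const_mul_atTop ha)
  filter_upwards [hlim.eventually_ge_atTop 1] with k hk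
  have hG := aux_gamma_lower _ c hk hc
  have hp : 0 < c ^ (a * k + b - 1) * Real.exp (-(c + 1)) := by positivity
  rw [Real.norm_of_nonneg (by have := hp.trans_le hG; positivity)]
  have e1 : c ^ (a * k + b - 1) = (2 * (R + 1)) ^ k * (c ^ (1 - b))⁻¹ := by
    rw [← hca, ← Real.rpow_natCast, ← Real.rpow_mul hc.le, ← Real.rpow_neg hc.le,
      ← Real.rpow_add hc]
    congr 1; ring
  calc R ^ k / Real.Gamma (a * k + b)
      ≤ (R + 1) ^ k / (c ^ (a * k + b - 1) * Real.exp (-(c + 1))) := by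
        gcongr
        linarith
    _ = _ := by
        rw [e1, Real.exp_neg, mul_pow]
        have : (R + 1) ^ k ≠ 0 := by positivity
        have : c ^ (1 - b) ≠ 0 := by positivity
        field_simp
        simp

theorem aux_beta (a b x : ℝ) (ha : 0 < a) (hb : 0 < b) (hx : 0 < x) :
    ∫ s in Set.Ioo 0 x, (x - s) ^ (a - 1) * s ^ (b - 1)
      = Real.Gamma a * Real.Gamma b / Real.Gamma (a + b) * x ^ (a + b - 1) := by
  rw [← integral_Ioc_eq_integral_Ioo, ← intervalIntegral.integral_of_le hx.le]
  apply Complex.ofReal_injective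
  rw [← intervalIntegral.integral_ofReal]
  have h := Complex.betaIntegral_scaled (b : ℂ) (a : ℂ) hx
  rw [Complex.betaIntegral_eq_Gamma_mul_div _ _ (by simpa) (by simpa)] at h
  have e : ∫ s in (0:ℝ)..x, (((x - s) ^ (a - 1) * s ^ (b - 1) : ℝ) : ℂ)
      = ∫ s in (0:ℝ)..x, (s : ℂ) ^ ((b : ℂ) - 1) * ((x : ℂ) - s) ^ ((a : ℂ) - 1) := by
    apply intervalIntegral.integral_congr
    intro s hs
    rw [Set.uIcc_of_le hx.le] at hs
    simp only
    rw [Complex.ofReal_mul, Complex.ofReal_cpow (by linarith [hs.2]),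
      Complex.ofReal_cpow hs.1]
    push_cast
    ring
  rw [e, h]
  push_cast
  rw [Complex.ofReal_cpow hx.le]
  simp only [← Complex.ofReal_add, Complex.Gamma_ofReal]
  push_cast
  rw [add_comm (b : ℂ) a, add_comm b a]
  ring

theorem aux_beta_int (a b x : ℝ) (ha : 0 < a) (hb : 0 < b) (hx : 0 < x) :
    IntegrableOn (fun s => (x - s) ^ (a - 1) * s ^ (b - 1)) (Set.Ioo 0 x) := by
  apply Integrable.of_integral_ne_zero
  rw [aux_beta a b x ha hb hx]
  have := Real.Gamma_pos_of_pos ha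
  have := Real.Gamma_pos_of_pos hb
  have := Real.Gamma_pos_of_pos (add_pos ha hb)
  positivity

theorem aux_measurable_ml (a b : ℝ) (ha : 0 < a) (hb : 0 < b) :
    Measurable (mittagLeffler a b) := by
  apply measurable_of_tendsto_metrizable
    (f := fun n z => ∑ k ∈ Finset.range n, z ^ k / Real.Gamma (a * k + b))
  · intro n
    fun_prop
  · rw [tendsto_pi_nhds]
    intro z
    refine HasSum.tendsto_sum_nat (Summable.hasSum ?_)
    refine Summable.of_norm ?_
    convert aux_summable a b |z| ha hb (abs_nonneg _) using 2 with k
    rw [norm_div, norm_pow, Real.norm_eq_abs,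
      Real.norm_of_nonneg (Real.Gamma_nonneg_of_nonneg (by positivity))]

/-- the kernel -/
noncomputable def auxK (α lam x : ℝ) : ℝ :=
  x ^ (α - 1) * mittagLeffler α α (-lam * x ^ α)

theorem auxK_eq (α lam x : ℝ) (hx : 0 < x) :
    auxK α lam x = ∑' k : ℕ, (-lam) ^ k / Real.Gamma (α * k + α) * x ^ (α * k + α - 1) := by
  rw [auxK, mittagLeffler, ← tsum_mul_left]
  congr 1 with k
  have : x ^ (α * k + α - 1) = x ^ (α - 1) * (x ^ α) ^ k := by
    rw [← Real.rpow_natCast (x ^ α), ← Real.rpow_mul hx.le, ← Real.rpow_add hx]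
    congr 1; ring
  rw [this, mul_pow]
  ring

theorem aux_term_summable (α b lam x : ℝ) (hα : 0 < α) (hb : 0 < b) (hx : 0 < x) :
    Summable fun k : ℕ => |lam| ^ k / Real.Gamma (α * k + b) * x ^ (α * k + b - 1) := by
  refine (summable_congr fun k => ?_).mpr
    ((aux_summable α b (|lam| * x ^ α) hα hb (by positivity)).mul_left (x ^ (b - 1)))
  have : x ^ (α * k + b - 1) = x ^ (b - 1) * (x ^ α) ^ k := by
    rw [← Real.rpow_natCast (x ^ α), ← Real.rpow_mul hx.le, ← Real.rpow_add hx]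
    congr 1; ring
  rw [this, mul_pow]
  ring

theorem aux_kernel (α lam x : ℝ) (hα : 0 < α) (hx : 0 < x) :
    auxK α lam x + lam / Real.Gamma α * ∫ s in Set.Ioo 0 x, (x - s) ^ (α - 1) * auxK α lam s
      = x ^ (α - 1) / Real.Gamma α := by
  have hGα := Real.Gamma_pos_of_pos hα
  have hpos : ∀ k : ℕ, 0 < α * k + α := fun k => by positivity
  have hG : ∀ k : ℕ, 0 < Real.Gamma (α * k + α) := fun k => Real.Gamma_pos_of_pos (hpos k)
  have key := hasSum_integral_of_summable_integral_norm
    (μ := volume.restrict (Set.Ioo 0 x))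
    (F := fun (k : ℕ) s => (-lam) ^ k / Real.Gamma (α * k + α) *
      ((x - s) ^ (α - 1) * s ^ (α * k + α - 1)))
    (fun k => (aux_beta_int α _ x hα (hpos k) hx).const_mul _) (by
      refine (summable_congr fun k => ?_).mpr
        ((aux_term_summable α (α + α) lam x hα (by positivity) hx).mul_left (Real.Gamma α))
      have : ∫ s in Set.Ioo 0 x, ‖(-lam) ^ k / Real.Gamma (α * k + α) *
          ((x - s) ^ (α - 1) * s ^ (α * k + α - 1))‖
          = ∫ s in Set.Ioo 0 x, |lam| ^ k / Real.Gamma (α * k + α) *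
          ((x - s) ^ (α - 1) * s ^ (α * k + α - 1)) := by
        apply setIntegral_congr_fun measurableSet_Ioo
        intro s hs
        have h1 : 0 < x - s := by linarith [hs.2]
        have h2 : 0 < s := hs.1
        simp only
        rw [norm_mul, norm_div, norm_pow, norm_neg, Real.norm_eq_abs,
          Real.norm_of_nonneg (hG k).le, Real.norm_of_nonneg (by positivity)]
      rw [this, integral_const_mul, aux_beta α _ x hα (hpos k) hx,
        show α + (α * k + α) = α * k + (α + α) by ring]
      have := (hG k).ne'
      field_simp)
  have e1 : ∫ s in Set.Ioo 0 x, (x - s) ^ (α - 1) * auxK α lam s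
      = ∫ s in Set.Ioo 0 x, ∑' k : ℕ, (-lam) ^ k / Real.Gamma (α * k + α) *
          ((x - s) ^ (α - 1) * s ^ (α * k + α - 1)) := by
    apply setIntegral_congr_fun measurableSet_Ioo
    intro s hs
    simp only
    rw [auxK_eq _ _ _ hs.1, ← tsum_mul_left]
    congr 1 with k
    ring
  have hsum : Summable fun k : ℕ => (-lam) ^ k / Real.Gamma (α * k + α) * x ^ (α * k + α - 1) := by
    refine Summable.of_norm ?_
    convert aux_term_summable α α lam x hα hα hx using 2 with k
    rw [norm_mul, norm_div, norm_pow, norm_neg, Real.norm_eq_abs,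
          Real.norm_of_nonneg (hG k).le, Real.norm_of_nonneg (by positivity)]
  have e2 : ∀ k : ℕ, lam / Real.Gamma α * ∫ s in Set.Ioo 0 x, (-lam) ^ k / Real.Gamma (α * k + α) *
      ((x - s) ^ (α - 1) * s ^ (α * k + α - 1))
      = -((-lam) ^ (k + 1) / Real.Gamma (α * (k + 1 : ℕ) + α) * x ^ (α * (k + 1 : ℕ) + α - 1)) := by
    intro k
    rw [integral_const_mul, aux_beta α _ x hα (hpos k) hx,
      show α + (α * k + α) = α * (k + 1 : ℕ) + α by push_cast; ring]
    have := (hG k).ne'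
    have := (hG (k + 1)).ne'
    field_simp
    ring
  rw [e1, ← key.tsum_eq, auxK_eq _ _ _ hx, hsum.tsum_eq_zero_add, ← tsum_mul_left,
    tsum_congr e2, tsum_neg]
  simp
  ring

theorem aux_rpow_int (α T : ℝ) (hα : 0 < α) (hT : 0 < T) :
    IntegrableOn (fun x : ℝ => x ^ (α - 1)) (Set.Ioo 0 T) :=
  (intervalIntegral.integrableOn_Ioo_rpow_iff hT).2 (by linarith)

theorem aux_measurable_K (α lam : ℝ) (hα : 0 < α) : Measurable (auxK α lam) := by
  have h := aux_measurable_ml α α hα hα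
  unfold auxK
  exact (measurable_id.pow_const _).mul
    (h.comp (measurable_const.mul (measurable_id.pow_const _)))

theorem aux_K_int (α lam T : ℝ) (hα : 0 < α) (hT : 0 < T) :
    IntegrableOn (auxK α lam) (Set.Ioo 0 T) := by
  refine Integrable.mono' ((aux_rpow_int α T hα hT).mul_const
    (∑' k : ℕ, (|lam| * T ^ α) ^ k / Real.Gamma (α * k + α)))
    (aux_measurable_K α lam hα).aestronglyMeasurable ?_
  filter_upwards [ae_restrict_mem measurableSet_Ioo] with x hx
  have hx0 : 0 < x := hx.1
  rw [auxK, norm_mul, Real.norm_of_nonneg (by positivity)]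
  gcongr
  refine tsum_of_norm_bounded
    (aux_summable α α (|lam| * T ^ α) hα hα (by positivity)).hasSum fun k => ?_
  rw [norm_div, norm_pow, norm_mul, norm_neg, Real.norm_eq_abs,
    Real.norm_of_nonneg (Real.Gamma_nonneg_of_nonneg (by positivity : 0 ≤ α * k + α)),
    Real.norm_of_nonneg (by positivity : 0 ≤ x ^ α)]
  have : 0 ≤ Real.Gamma (α * k + α) := Real.Gamma_nonneg_of_nonneg (by positivity)
  have := hx.2.le
  gcongr

/-- Truncated convolution as full convolution. -/
theorem aux_trunc (A U : ℝ → ℝ) (t T : ℝ) (htT : t ≤ T) (hU : ∀ s ≤ 0, U s = 0) :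
    ∫ s in Set.Ioo 0 t, A (t - s) * U s
      = ∫ x, (Set.Ioo 0 T).indicator A x * U (t - x) := by
  rw [← integral_sub_left_eq_self _ volume t, ← integral_indicator measurableSet_Ioo]
  congr 1 with s
  simp only [sub_sub_cancel]
  by_cases hs : s ∈ Set.Ioo 0 t
  · rw [Set.indicator_of_mem hs, Set.indicator_of_mem]
    exact ⟨by linarith [hs.2], by linarith [hs.1]⟩
  · rw [Set.indicator_of_notMem hs]
    by_cases h0 : s ≤ 0
    · rw [hU s h0, mul_zero]
    · rw [Set.indicator_of_notMem, zero_mul]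
      intro h
      exact hs ⟨by linarith, by linarith [h.1]⟩

theorem aux_cont (A V : ℝ → ℝ) (M : ℝ) (hA : Integrable A) (hVm : Measurable V)
    (hVb : ∀ x, ‖V x‖ ≤ M) (hVc : ∀ x, x ≠ 0 → ContinuousAt V x) :
    Continuous fun t => ∫ x, A x * V (t - x) := by
  rw [continuous_iff_continuousAt]
  intro t₀
  refine continuousAt_of_dominated (bound := fun x => ‖A x‖ * M) ?_ ?_ (hA.norm.mul_const _) ?_
  · refine Filter.Eventually.of_forall fun t => ?_
    exact hA.1.mul (hVm.comp (measurable_const.sub measurable_id)).aestronglyMeasurable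
  · refine Filter.Eventually.of_forall fun t => Filter.Eventually.of_forall fun x => ?_
    rw [norm_mul]
    gcongr
    exact hVb _
  · have : ∀ᵐ x : ℝ, x ≠ t₀ := by simp [ae_iff]
    filter_upwards [this] with x hx
    refine continuousAt_const.mul ?_
    refine ContinuousAt.comp (f := fun t => t - x) (g := V) (hVc _ (sub_ne_zero.2 hx.symm)) ?_
    fun_prop

theorem aux_assoc (A B V : ℝ → ℝ) (M : ℝ) (hA : Integrable A) (hB : Integrable B)
    (hVm : Measurable V) (hVb : ∀ x, ‖V x‖ ≤ M)
    (hVc : ∀ x, x ≠ 0 → ContinuousAt V x) (t : ℝ) :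
    ∫ x, (∫ y, A y * B (x - y)) * V (t - x) = ∫ x, A x * ∫ y, B y * V (t - x - y) := by
  have hex : ∀ x, ConvolutionExistsAt (fun x => ‖B x‖) (fun x => ‖V x‖) x
      (ContinuousLinearMap.mul ℝ ℝ) volume := by
    intro x
    refine hB.norm.mul_bdd (c := M) ?_ ?_
    · exact (hVm.comp (measurable_const.sub measurable_id)).norm.aestronglyMeasurable
    · refine Filter.Eventually.of_forall fun y => ?_
      rw [norm_norm]; exact hVb _
  have h := convolution_assoc (μ := volume) (ν := volume) (f := A) (g := B) (k := V)
    (ContinuousLinearMap.mul ℝ ℝ) (ContinuousLinearMap.mul ℝ ℝ) (ContinuousLinearMap.mul ℝ ℝ)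
    (ContinuousLinearMap.mul ℝ ℝ) (fun x y z => by simp [mul_assoc]) (x₀ := t)
    hA.1 hB.1 hVm.aestronglyMeasurable
    (hA.ae_convolution_exists _ hB) (Filter.Eventually.of_forall hex) (by
      refine hA.norm.mul_bdd (c := (∫ x, ‖B x‖) * M) ?_ ?_
      · have hc := aux_cont (fun x => ‖B x‖) (fun x => ‖V x‖) M hB.norm hVm.norm
          (fun x => by rw [norm_norm]; exact hVb x) (fun x hx => (hVc x hx).norm)
        exact (hc.comp (continuous_const.sub continuous_id)).aestronglyMeasurable
      · refine Filter.Eventually.of_forall fun y => ?_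
        rw [convolution_def, ← integral_mul_const]
        refine norm_integral_le_of_norm_le (hB.norm.mul_const _) ?_
        refine Filter.Eventually.of_forall fun z => ?_
        simp only [ContinuousLinearMap.mul_apply', norm_mul, norm_norm]
        gcongr
        exact hVb _)
  simpa only [convolution_def, ContinuousLinearMap.mul_apply'] using h

theorem solution_operator_solves_volterra
    (α lam T : ℝ) (hα : α ∈ Set.Ioo (0 : ℝ) 1) (hT : 0 < T)
    (v w : ℝ → ℝ)
    (hv : ContinuousOn v (Set.Icc 0 T))
    (hw0 : w 0 = 0)
    (hw : ∀ t ∈ Set.Ioc 0 T,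
      w t = ∫ s in Set.Ioo 0 t,
        (t - s) ^ (α - 1) * mittagLeffler α α (-lam * (t - s) ^ α) * v s) :
    ContinuousOn w (Set.Icc 0 T) ∧
    ∀ t ∈ Set.Icc 0 T,
      w t + (lam / Real.Gamma α) * ∫ s in Set.Ioo 0 t, (t - s) ^ (α - 1) * w s
        = (1 / Real.Gamma α) * ∫ s in Set.Ioo 0 t, (t - s) ^ (α - 1) * v s := by
  obtain ⟨hα0, -⟩ := hα
  set v' : ℝ → ℝ := Set.IccExtend hT.le ((Set.Icc 0 T).domRestrict v) with hv'
  have hv'c : Continuous v' := hv.domRestrict.Icc_extend'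
  have hv'e : ∀ s ∈ Set.Icc 0 T, v' s = v s := fun s hs => by
    rw [hv', Set.IccExtend_of_mem _ _ hs]; rfl
  obtain ⟨M, hM⟩ : ∃ M, ∀ s, ‖v' s‖ ≤ M := by
    obtain ⟨M, hM⟩ := isCompact_Icc.exists_bound_of_continuousOn hv
    refine ⟨M, fun s => hM _ (Set.projIcc 0 T hT.le s).2⟩
  have hM0 : 0 ≤ M := (norm_nonneg _).trans (hM 0)
  set V : ℝ → ℝ := (Set.Ioi 0).indicator v' with hV
  have hVm : Measurable V := hv'c.measurable.indicator measurableSet_Ioi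
  have hVb : ∀ s, ‖V s‖ ≤ M := fun s => (norm_indicator_le_norm_self _ _).trans (hM s)
  have hV0 : ∀ s ≤ 0, V s = 0 := fun s hs => Set.indicator_of_notMem (by simpa using hs) _
  have hVe : ∀ s, 0 < s → s ≤ T → V s = v s := fun s h1 h2 => by
    rw [hV, Set.indicator_of_mem (by simpa using h1), hv'e s ⟨h1.le, h2⟩]
  have hVc : ∀ x, x ≠ 0 → ContinuousAt V x := by
    intro x hx
    rcases lt_or_gt_of_ne hx with h | h
    · refine (continuousAt_const (y := (0:ℝ))).congr ?_
      filter_upwards [Iio_mem_nhds h] with y hy using (hV0 y (le_of_lt hy)).symm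
    · refine hv'c.continuousAt.congr ?_
      filter_upwards [Ioi_mem_nhds h] with y hy using (Set.indicator_of_mem hy _).symm
  set K0 : ℝ → ℝ := (Set.Ioo 0 T).indicator (auxK α lam) with hK0
  set G0 : ℝ → ℝ := (Set.Ioo 0 T).indicator (fun x => x ^ (α - 1)) with hG0
  have hK0i : Integrable K0 := (aux_K_int α lam T hα0 hT).integrable_indicator measurableSet_Ioo
  have hG0i : Integrable G0 := (aux_rpow_int α T hα0 hT).integrable_indicator measurableSet_Ioo
  have hK0z : ∀ s ≤ 0, K0 s = 0 := fun s hs =>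
    Set.indicator_of_notMem (fun h => absurd h.1 (not_lt.2 hs)) _
  have hG0z : ∀ s ≤ 0, G0 s = 0 := fun s hs =>
    Set.indicator_of_notMem (fun h => absurd h.1 (not_lt.2 hs)) _
  set W : ℝ → ℝ := fun t => ∫ x, K0 x * V (t - x) with hW
  have hWc : Continuous W := aux_cont K0 V M hK0i hVm hVb hVc
  have hW0 : ∀ s ≤ 0, W s = 0 := by
    intro s hs
    have : ∀ x, K0 x * V (s - x) = 0 := fun x => by
      rcases le_or_gt x 0 with h | h
      · rw [hK0z x h, zero_mul]
      · rw [hV0 _ (by linarith), mul_zero]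
    simp [hW, this]
  have hWe : ∀ t ∈ Set.Icc 0 T, w t = W t := by
    intro t ht
    rcases ht.1.eq_or_lt with h | h
    · rw [← h, hw0, hW0 0 le_rfl]
    · rw [hw t ⟨h, ht.2⟩, hW]
      simp only
      rw [← aux_trunc (auxK α lam) V t T ht.2 hV0]
      apply setIntegral_congr_fun measurableSet_Ioo
      intro s hs
      simp only
      rw [hVe s hs.1 (hs.2.le.trans ht.2), auxK]
  refine ⟨hWc.continuousOn.congr hWe, fun t ht => ?_⟩
  have e1 : ∫ s in Set.Ioo 0 t, (t - s) ^ (α - 1) * w s = ∫ x, G0 x * W (t - x) := by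
    rw [← aux_trunc (fun x => x ^ (α - 1)) W t T ht.2 hW0]
    apply setIntegral_congr_fun measurableSet_Ioo
    intro s hs
    simp only
    rw [hWe s ⟨hs.1.le, hs.2.le.trans ht.2⟩]
  have e2 : ∫ s in Set.Ioo 0 t, (t - s) ^ (α - 1) * v s = ∫ x, G0 x * V (t - x) := by
    rw [← aux_trunc (fun x => x ^ (α - 1)) V t T ht.2 hV0]
    apply setIntegral_congr_fun measurableSet_Ioo
    intro s hs
    simp only
    rw [hVe s hs.1 (hs.2.le.trans ht.2)]
  have hVt : AEStronglyMeasurable (fun x => V (t - x)) volume :=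
    (hVm.comp (measurable_const.sub measurable_id)).aestronglyMeasurable
  have hVtb : ∀ᵐ x : ℝ, ‖V (t - x)‖ ≤ M := Filter.Eventually.of_forall fun x => hVb _
  have hGK : Integrable (fun x => ∫ y, G0 y * K0 (x - y)) := by
    exact hG0i.integrable_convolution (ContinuousLinearMap.mul ℝ ℝ) hK0i
  rw [hWe t ht, e1, e2]
  simp only [hW]
  rw [← aux_assoc G0 K0 V M hG0i hK0i hVm hVb hVc t, ← integral_const_mul, ← integral_const_mul,
    ← integral_add (hK0i.mul_bdd hVt hVtb) ((hGK.mul_bdd hVt hVtb).const_mul _)]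
  congr 1 with x
  rcases le_or_gt t x with h | h
  · rw [hV0 _ (by linarith)]; simp
  have hxT : x < T := h.trans_le ht.2
  have e3 : ∫ y, G0 y * K0 (x - y) = ∫ s in Set.Ioo 0 x, (x - s) ^ (α - 1) * K0 s :=
    (aux_trunc (fun x => x ^ (α - 1)) K0 x T hxT.le hK0z).symm
  rw [e3]
  rcases le_or_gt x 0 with h0 | h0
  · rw [hK0z x h0, hG0z x h0, Set.Ioo_eq_empty (by simpa using h0)]; simp
  have e4 : ∫ s in Set.Ioo 0 x, (x - s) ^ (α - 1) * K0 s
      = ∫ s in Set.Ioo 0 x, (x - s) ^ (α - 1) * auxK α lam s := by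
    apply setIntegral_congr_fun measurableSet_Ioo
    intro s hs
    simp only
    rw [hK0, Set.indicator_of_mem (show s ∈ Set.Ioo 0 T from ⟨hs.1, hs.2.trans hxT⟩)]
  have hxm : x ∈ Set.Ioo 0 T := ⟨h0, hxT⟩
  have hk := aux_kernel α lam x hα0 h0
  rw [e4, hK0, hG0, Set.indicator_of_mem hxm, Set.indicator_of_mem hxm,
    ← mul_assoc, ← add_mul, hk]
  ring
end

section
/- Let α ∈ (0,1). Then for every real number x (in particular for every x < 0), the generalized Mittag-Leffler function value E_{α,α}(x) := ∑_{k=0}^∞ x^k / Γ(α k + α) is strictly positive. -/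
open Real

open MeasureTheory Set intervalIntegral

/-- crude lower bound for Gamma -/
lemma gamma_lower (R s : ℝ) (hR : 0 < R) (hs : 1 ≤ s) :
    R ^ (s - 1) * Real.exp (-R) ≤ Real.Gamma s := by
  rw [Real.Gamma_eq_integral (by linarith)]
  have hint := Real.GammaIntegral_convergent (s := s) (by linarith)
  calc R ^ (s - 1) * Real.exp (-R) = ∫ x in Ioi R, R ^ (s - 1) * Real.exp (-x) := by
        rw [MeasureTheory.integral_const_mul, integral_exp_neg_Ioi]
    _ ≤ ∫ x in Ioi R, Real.exp (-x) * x ^ (s - 1) := by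
        refine setIntegral_mono_on ?_ (hint.mono_set (Ioi_subset_Ioi hR.le)) measurableSet_Ioi ?_
        · exact (integrableOn_exp_neg_Ioi R).const_mul _
        · intro x hx
          rw [mul_comm]
          have : R ^ (s-1) ≤ x ^ (s-1) := Real.rpow_le_rpow hR.le (le_of_lt hx) (by linarith)
          gcongr
    _ ≤ _ := by
        refine setIntegral_mono_set hint ?_ (Ioi_subset_Ioi hR.le).eventuallyLE
        filter_upwards [ae_restrict_mem measurableSet_Ioi] with x hx
        have : (0:ℝ) < x := hx
        positivity

lemma ml_summable_s16 (a b x : ℝ) (ha : 0 < a) (hb : 0 < b) :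
    Summable (fun k : ℕ => x ^ k / Real.Gamma (a * k + b)) := by
  set q : ℝ := 2 * |x| + 1 with hq
  have hq0 : 0 < q := by positivity
  set R : ℝ := q ^ (1 / a) with hRdef
  have hR : 0 < R := by positivity
  have hRa : R ^ a = q := by
    rw [hRdef, ← Real.rpow_mul hq0.le]; field_simp; simp
  have hgeo : Summable (fun k : ℕ => (Real.exp R * R ^ (1 - b)) * (1 / 2 : ℝ) ^ k) :=
    (summable_geometric_two).mul_left _
  refine Summable.of_norm_bounded_eventually_nat hgeo ?_
  obtain ⟨N, hN⟩ := exists_nat_gt (1 / a)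
  filter_upwards [Filter.eventually_ge_atTop N] with k hk
  have hk' : (1 / a) < k := hN.trans_le (by exact_mod_cast hk)
  have h1 : 1 ≤ a * k + b := by
    have : 1 < k * a := by rwa [div_lt_iff₀ ha] at hk'
    nlinarith
  have hG := gamma_lower R _ hR h1
  have hlow : 0 < R ^ (a * k + b - 1) * Real.exp (-R) := by positivity
  rw [norm_div, norm_pow, Real.norm_eq_abs, Real.norm_eq_abs, abs_of_pos (hlow.trans_le hG)]
  have e : R ^ (a * k + b - 1) = q ^ k * (R ^ (1 - b))⁻¹ := by
    rw [← Real.rpow_neg hR.le, ← hRa, ← Real.rpow_natCast, ← Real.rpow_mul hR.le,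
      ← Real.rpow_add hR]
    congr 1; ring
  calc |x| ^ k / Real.Gamma (a * k + b)
      ≤ |x| ^ k / (R ^ (a * k + b - 1) * Real.exp (-R)) := by gcongr
    _ = (Real.exp R * R ^ (1 - b)) * (|x| / q) ^ k := by
        rw [e, Real.exp_neg, div_pow]; field_simp
    _ ≤ _ := by
        have : |x| / q ≤ 1 / 2 := by rw [div_le_iff₀ hq0, hq]; linarith
        have h0 : 0 ≤ |x| / q := by positivity
        exact mul_le_mul_of_nonneg_left (pow_le_pow_left₀ h0 this k) (by positivity)

lemma ml_lipschitz (a b R : ℝ) (ha : 0 < a) (hb : 0 < b) (hR : 1 ≤ R) :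
    ∃ C : ℝ, 0 < C ∧ ∀ x y : ℝ, |x| ≤ R → |y| ≤ R →
      |mittagLeffler a b x - mittagLeffler a b y| ≤ C * |x - y| := by
  have hG : ∀ k : ℕ, 0 < Real.Gamma (a * k + b) := fun k => Real.Gamma_pos_of_pos (by positivity)
  have hS := ml_summable_s16 a b (2 * R) ha hb
  refine ⟨∑' k : ℕ, (2 * R) ^ k / Real.Gamma (a * k + b),
    hS.tsum_pos (fun k => by have := hG k; positivity) 0 (by have := hG 0; positivity), ?_⟩
  intro x y hx hy
  unfold mittagLeffler
  rw [← (ml_summable_s16 a b x ha hb).tsum_sub (ml_summable_s16 a b y ha hb), ← tsum_mul_right,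
    ← Real.norm_eq_abs]
  refine tsum_of_norm_bounded (hS.mul_right _).hasSum ?_
  intro k
  have := hG k
  rw [← sub_div, norm_div, Real.norm_eq_abs, Real.norm_eq_abs, abs_of_pos this, div_mul_eq_mul_div]
  gcongr
  have h2 : (k : ℝ) ≤ 2 ^ k := by exact_mod_cast (Nat.lt_two_pow_self).le
  have h3 : (max |x| |y|) ^ (k - 1) ≤ R ^ k :=
    (pow_le_pow_left₀ (by positivity) (max_le hx hy) _).trans
      (pow_le_pow_right₀ hR (Nat.sub_le _ _))
  calc |x ^ k - y ^ k| ≤ |x - y| * k * max |x| |y| ^ (k - 1) := abs_pow_sub_pow_le ..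
    _ ≤ |x - y| * 2 ^ k * R ^ k := by gcongr
    _ = _ := by rw [mul_pow]; ring

lemma ml_continuous (a b : ℝ) (ha : 0 < a) (hb : 0 < b) : Continuous (mittagLeffler a b) := by
  rw [continuous_iff_continuousAt]
  intro x
  obtain ⟨C, hC, h⟩ := ml_lipschitz a b (|x| + 1) ha hb (by linarith [abs_nonneg x])
  rw [ContinuousAt, tendsto_iff_norm_sub_tendsto_zero]
  have ht : Filter.Tendsto (fun y => C * |y - x|) (nhds x) (nhds 0) := by
    have : Continuous (fun y => C * |y - x|) := by fun_prop
    simpa using this.tendsto x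
  refine squeeze_zero' (Filter.Eventually.of_forall fun _ => norm_nonneg _) ?_ ht
  filter_upwards [Metric.ball_mem_nhds x one_pos] with y hy
  refine h y x ?_ (by linarith)
  rw [Metric.mem_ball, Real.dist_eq] at hy
  have := abs_add_le (y - x) x
  rw [sub_add_cancel] at this
  linarith

lemma beta_real (a b : ℝ) (ha : 0 < a) (hb : 0 < b) :
    IntervalIntegrable (fun s : ℝ => s ^ (a - 1) * (1 - s) ^ (b - 1)) volume 0 1 ∧
    ∫ s in (0:ℝ)..1, s ^ (a - 1) * (1 - s) ^ (b - 1) =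
      Real.Gamma a * Real.Gamma b / Real.Gamma (a + b) := by
  have hc := Complex.betaIntegral_convergent (u := a) (v := b) (by simpa) (by simpa)
  have e : ∀ s ∈ Ioc (0:ℝ) 1, ((s : ℂ) ^ ((a:ℂ) - 1) * (1 - (s : ℂ)) ^ ((b:ℂ) - 1)) =
      ((s ^ (a - 1) * (1 - s) ^ (b - 1) : ℝ) : ℂ) := by
    intro s hs
    rw [Complex.ofReal_mul, Complex.ofReal_cpow hs.1.le, Complex.ofReal_cpow (by linarith [hs.2])]
    push_cast; rfl
  constructor
  · rw [intervalIntegrable_iff_integrableOn_Ioc_of_le zero_le_one] at hc ⊢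
    have h2 := (hc.congr_fun e measurableSet_Ioc).re
    simp only [RCLike.re_to_complex, Complex.ofReal_re] at h2
    exact h2
  · have h1 := ProbabilityTheory.beta_eq_betaIntegralReal a b ha hb
    rw [ProbabilityTheory.beta] at h1
    rw [h1, Complex.betaIntegral, integral_of_le zero_le_one, integral_of_le zero_le_one,
      setIntegral_congr_fun measurableSet_Ioc e]
    have h3 := _root_.integral_ofReal (𝕜 := ℂ) (μ := volume.restrict (Ioc (0:ℝ) 1))
      (f := fun s : ℝ => s ^ (a - 1) * (1 - s) ^ (b - 1))
    have h4 := congrArg Complex.re h3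
    simpa using h4.symm

/-- The Volterra equation on the unit interval. -/
lemma ml_volterra_unit (a z : ℝ) (ha : 0 < a) :
    mittagLeffler a a z = 1 / Real.Gamma a + z / Real.Gamma a *
      ∫ u in (0:ℝ)..1, (u ^ (a - 1) * (1 - u) ^ (a - 1)) * mittagLeffler a a (z * u ^ a) := by
  have hG : ∀ k : ℕ, 0 < Real.Gamma (a * k + a) := fun k => Real.Gamma_pos_of_pos (by positivity)
  have hGa : 0 < Real.Gamma a := Real.Gamma_pos_of_pos ha
  let F : ℕ → ℝ → ℝ := fun k u =>
    z ^ k / Real.Gamma (a * k + a) * (u ^ ((a * k + a) - 1) * (1 - u) ^ (a - 1))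
  have hB := fun k : ℕ => beta_real (a * k + a) a (by positivity) ha
  have hFi : ∀ k, Integrable (F k) (volume.restrict (Ioc 0 1)) := by
    intro k
    have := (hB k).1
    rw [intervalIntegrable_iff_integrableOn_Ioc_of_le zero_le_one] at this
    exact this.const_mul _
  have hval : ∀ k : ℕ, ∀ y : ℝ, y / Real.Gamma (a * k + a) *
      (Real.Gamma (a * k + a) * Real.Gamma a / Real.Gamma (a * k + a + a)) =
      Real.Gamma a * (y / Real.Gamma (a * k + a + a)) := by
    intro k y
    have := (hG k).ne'
    generalize Real.Gamma (a * k + a) = A at *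
    field_simp
  have hBs : ∀ k : ℕ, ∫ u in Ioc (0:ℝ) 1, u ^ ((a * k + a) - 1) * (1 - u) ^ (a - 1) =
      Real.Gamma (a * k + a) * Real.Gamma a / Real.Gamma (a * k + a + a) := by
    intro k
    rw [← (hB k).2, integral_of_le zero_le_one]
  have hI : ∀ k, ∫ u in Ioc (0:ℝ) 1, F k u = Real.Gamma a * (z ^ k / Real.Gamma (a * k + a + a)) := by
    intro k
    simp only [F]
    rw [MeasureTheory.integral_const_mul, hBs, hval]
  have hIn : ∀ k, ∫ u in Ioc (0:ℝ) 1, ‖F k u‖ =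
      Real.Gamma a * (|z| ^ k / Real.Gamma (a * k + a + a)) := by
    intro k
    rw [← hval, ← hBs, ← MeasureTheory.integral_const_mul]
    refine setIntegral_congr_fun measurableSet_Ioc fun u hu => ?_
    have h0 : 0 < u := hu.1
    have h1 : 0 ≤ 1 - u := by linarith [hu.2]
    simp only [F]
    rw [norm_mul, norm_div, norm_pow, Real.norm_eq_abs, Real.norm_eq_abs, abs_of_pos (hG k),
      Real.norm_of_nonneg (by positivity)]
  have hsum2 : ∀ y : ℝ, Summable (fun k : ℕ => y ^ k / Real.Gamma (a * k + a + a)) := by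
    intro y
    have := ml_summable_s16 a (a + a) y ha (by positivity)
    simpa [add_assoc] using this
  have key := hasSum_integral_of_summable_integral_norm hFi
    (by simp_rw [hIn]; exact (hsum2 |z|).mul_left _)
  simp_rw [hI] at key
  have hRHS : ∫ u in Ioc (0:ℝ) 1, ∑' k, F k u =
      ∫ u in (0:ℝ)..1, (u ^ (a - 1) * (1 - u) ^ (a - 1)) * mittagLeffler a a (z * u ^ a) := by
    rw [integral_of_le zero_le_one]
    refine setIntegral_congr_fun measurableSet_Ioc fun u hu => ?_
    have h0 : 0 < u := hu.1
    simp only [F, mittagLeffler]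
    rw [← tsum_mul_left]
    congr 1; ext k
    have : u ^ (a * k + a - 1) = (u ^ a) ^ k * u ^ (a - 1) := by
      rw [← Real.rpow_natCast, ← Real.rpow_mul h0.le, ← Real.rpow_add h0]; congr 1; ring
    rw [this, mul_pow]; ring
  rw [hRHS] at key
  rw [← key.tsum_eq, tsum_mul_left]
  rw [mittagLeffler, (ml_summable_s16 a a z ha ha).tsum_eq_zero_add]
  have h2 : ∀ k : ℕ, z ^ (k + 1) / Real.Gamma (a * ((k + 1 : ℕ) : ℝ) + a) =
      z * (z ^ k / Real.Gamma (a * k + a + a)) := by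
    intro k
    rw [show a * ((k + 1 : ℕ) : ℝ) + a = a * k + a + a by push_cast; ring]; ring
  simp_rw [h2]
  rw [tsum_mul_left]
  simp only [pow_zero, Nat.cast_zero, mul_zero, zero_add]
  generalize (∑' x : ℕ, z ^ x / Real.Gamma (a * x + a + a)) = T
  field_simp

lemma ml_volterra (a l t : ℝ) (ha : 0 < a) (ht : 0 < t) :
    IntervalIntegrable (fun s : ℝ => s ^ (a - 1) * (1 - s / t) ^ (a - 1) *
      mittagLeffler a a (-l * s ^ a)) volume 0 t ∧
    mittagLeffler a a (-l * t ^ a) = 1 / Real.Gamma a - l / Real.Gamma a *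
      ∫ s in (0:ℝ)..t, s ^ (a - 1) * (1 - s / t) ^ (a - 1) * mittagLeffler a a (-l * s ^ a) := by
  let f : ℝ → ℝ := fun u => (u ^ (a - 1) * (1 - u) ^ (a - 1)) *
    mittagLeffler a a (-l * t ^ a * u ^ a)
  have hfi : IntervalIntegrable f volume 0 1 := by
    refine (beta_real a a ha ha).1.mul_continuousOn ?_
    refine ((ml_continuous a a ha ha).comp ?_).continuousOn
    exact continuous_const.mul (Real.continuous_rpow_const ha.le)
  have hpt : ∀ s ∈ Ioc 0 t, s ^ (a - 1) * (1 - s / t) ^ (a - 1) *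
      mittagLeffler a a (-l * s ^ a) = t ^ (a - 1) * f (s / t) := by
    intro s hs
    have hs0 : 0 < s := hs.1
    simp only [f]
    rw [Real.div_rpow hs0.le ht.le, Real.div_rpow hs0.le ht.le]
    have h1 : 0 < t ^ (a - 1) := by positivity
    have h2 : 0 < t ^ a := by positivity
    have h3 : -l * t ^ a * (s ^ a / t ^ a) = -l * s ^ a := by field_simp
    rw [h3]; field_simp
  constructor
  · have h := (hfi.comp_mul_left (c := t⁻¹)).const_mul (t ^ (a - 1))
    simp only [zero_div, one_div, inv_inv] at h
    rw [intervalIntegrable_iff_integrableOn_Ioc_of_le ht.le] at h ⊢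
    refine h.congr_fun ?_ measurableSet_Ioc
    intro s hs
    have h5 := hpt s hs
    rw [div_eq_inv_mul] at h5
    simp only [div_eq_inv_mul]
    exact h5.symm
  · have : ∫ s in (0:ℝ)..t, s ^ (a - 1) * (1 - s / t) ^ (a - 1) * mittagLeffler a a (-l * s ^ a)
        = t ^ a * ∫ u in (0:ℝ)..1, f u := by
      rw [integral_of_le ht.le, setIntegral_congr_fun measurableSet_Ioc hpt,
        ← integral_of_le ht.le, intervalIntegral.integral_const_mul,
        intervalIntegral.integral_comp_div f ht.ne', zero_div, div_self ht.ne', smul_eq_mul,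
        ← mul_assoc, Real.rpow_sub_one ht.ne', div_mul_cancel₀ _ ht.ne']
    rw [this, ml_volterra_unit a (-l * t ^ a) ha]
    simp only [f]
    ring

/-- Tangent-type lower bound for the increment of the kernel. -/
lemma kernel_incr (a x y : ℝ) (ha1 : a < 1) (hx : 0 ≤ x) (hxy : x ≤ y) (hy : y < 1) :
    (1 - a) * (y - x) ≤ (1 - y) ^ (a - 1) - (1 - x) ^ (a - 1) := by
  have hX : 0 < 1 - x := by linarith
  have hY : 0 < 1 - y := by linarith
  set r : ℝ := (1 - y) / (1 - x) with hr
  have hr0 : 0 < r := by positivity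
  have hb : 1 + (a - 1) * (r - 1) ≤ r ^ (a - 1) := by
    rw [Real.rpow_def_of_pos hr0]
    have h1 := Real.add_one_le_exp (Real.log r * (a - 1))
    have h2 := Real.log_le_sub_one_of_pos hr0
    nlinarith
  have hYe : 1 - y = r * (1 - x) := by rw [hr]; field_simp
  have hX1 : 1 ≤ (1 - x) ^ (a - 1) :=
    Real.one_le_rpow_of_pos_of_le_one_of_nonpos hX (by linarith) (by linarith)
  have h1r : y - x ≤ 1 - r := by
    rw [hr, le_sub_iff_add_le, ← le_sub_iff_add_le', div_le_iff₀ hX]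
    nlinarith
  have h1r0 : 0 ≤ 1 - r := by linarith
  rw [hYe, Real.mul_rpow hr0.le hX.le]
  nlinarith [mul_nonneg (sub_nonneg.2 hX1) (mul_nonneg (sub_nonneg.2 ha1.le) h1r0),
    mul_le_mul_of_nonneg_left h1r (sub_nonneg.2 ha1.le)]

lemma no_first_zero (a l : ℝ) (ha : 0 < a) (ha1 : a < 1) (hl : 0 < l)
    (hz : mittagLeffler a a (-l) ≤ 0)
    (hpos : ∀ y, 0 ≤ y → y < l → 0 < mittagLeffler a a (-y)) : False := by
  set g : ℝ → ℝ := fun s => mittagLeffler a a (-l * s ^ a) with hg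
  have hgc : Continuous g :=
    (ml_continuous a a ha ha).comp (continuous_const.mul (Real.continuous_rpow_const ha.le))
  have hgpos : ∀ s, 0 ≤ s → s < 1 → 0 < g s := by
    intro s h0 h1
    have h2 := hpos (l * s ^ a) (by positivity)
      (by have := Real.rpow_lt_one h0 h1 ha; nlinarith)
    simpa [hg] using h2
  obtain ⟨C0, hC0, hlip⟩ := ml_lipschitz a a (l + 1) ha ha (by linarith)
  set C := C0 * l with hC
  have hCpos : 0 < C := by positivity
  have hgup : ∀ s, 0 ≤ s → s ≤ 1 → g s ≤ C * (1 - s) := by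
    intro s h0 h1
    have hs1 : s ^ a ≤ 1 := Real.rpow_le_one h0 h1 ha.le
    have hs0 : 0 ≤ s ^ a := by positivity
    have hsa : s ≤ s ^ a := Real.self_le_rpow_of_le_one h0 h1 ha1.le
    have h := hlip (-l * s ^ a) (-l) (by rw [abs_le]; constructor <;> nlinarith)
      (by rw [abs_le]; constructor <;> linarith)
    have e : |-l * s ^ a - -l| = l * (1 - s ^ a) := by
      rw [show -l * s ^ a - -l = l * (1 - s ^ a) by ring]
      exact abs_of_nonneg (mul_nonneg hl.le (by linarith))
    rw [e] at h
    have h3 := (le_abs_self _).trans h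
    have h4 : C0 * (l * (1 - s ^ a)) ≤ C * (1 - s) := by
      rw [hC, mul_assoc]; gcongr
    simp only [hg]
    linarith
  have hGa : 0 < Real.Gamma a := Real.Gamma_pos_of_pos ha
  let φ : ℝ → ℝ → ℝ := fun t s => s ^ (a - 1) * (1 - s / t) ^ (a - 1) * g s
  have hV : ∀ t, 0 < t → IntervalIntegrable (φ t) volume 0 t ∧
      g t = 1 / Real.Gamma a - l / Real.Gamma a * ∫ s in (0:ℝ)..t, φ t s :=
    fun t ht => ml_volterra a l t ha ht
  -- comparison of the two integrals
  have hI1 : 1 / l ≤ ∫ s in (0:ℝ)..1, φ 1 s := by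
    have h := (hV 1 one_pos).2
    have h1 : g 1 ≤ 0 := by simpa [hg] using hz
    rw [h] at h1
    rw [div_le_iff₀ hl]
    have h2 : (1 - l * ∫ s in (0:ℝ)..1, φ 1 s) / Real.Gamma a ≤ 0 := by
      refine le_trans (le_of_eq ?_) h1; ring
    rw [div_le_iff₀ hGa] at h2
    linarith
  have hIt : ∀ t, 0 < t → t < 1 → ∫ s in (0:ℝ)..t, φ t s ≤ 1 / l := by
    intro t ht ht1
    have h := (hV t ht).2
    have h1 := hgpos t ht.le ht1
    rw [h] at h1
    rw [le_div_iff₀ hl]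
    have h2 : 0 < (1 - l * ∫ s in (0:ℝ)..t, φ t s) / Real.Gamma a := by
      refine lt_of_lt_of_eq h1 ?_; ring
    have h3 := (div_pos_iff_of_pos_right hGa).1 h2
    linarith
  let ψ : ℝ → ℝ := fun s => (1 - a) * s ^ a * g s
  have hψc : Continuous ψ := (continuous_const.mul (Real.continuous_rpow_const ha.le)).mul hgc
  set c := ∫ s in (0:ℝ)..(1/2), ψ s with hc
  have hcpos : 0 < c := by
    refine intervalIntegral_pos_of_pos_on (hψc.intervalIntegrable _ _) ?_ (by norm_num)
    intro s hs
    have h1 := hgpos s hs.1.le (by linarith [hs.2])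
    have h2 : 0 < s := hs.1
    have h3 : 0 < 1 - a := by linarith
    simp only [ψ]
    positivity
  have hmain : ∀ t, 1 / 2 < t → t < 1 → c ≤ 2 * C * (1 - t) ^ a := by
    intro t ht ht1
    have ht0 : 0 < t := by linarith
    have i1 := (hV 1 one_pos).1
    have it := (hV t ht0).1
    have i1a : IntervalIntegrable (φ 1) volume 0 (1/2) :=
      i1.mono_set (by rw [uIcc_of_le, uIcc_of_le] <;> [apply Icc_subset_Icc; skip; skip] <;> norm_num)
    have i1b : IntervalIntegrable (φ 1) volume (1/2) t :=
      i1.mono_set (by rw [uIcc_of_le ht.le, uIcc_of_le zero_le_one]; apply Icc_subset_Icc <;> linarith)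
    have i1c : IntervalIntegrable (φ 1) volume t 1 :=
      i1.mono_set (by rw [uIcc_of_le ht1.le, uIcc_of_le zero_le_one]; apply Icc_subset_Icc <;> linarith)
    have ita : IntervalIntegrable (φ t) volume 0 (1/2) :=
      it.mono_set (by
        rw [uIcc_of_le (by norm_num), uIcc_of_le ht0.le]; apply Icc_subset_Icc <;> linarith)
    have itb : IntervalIntegrable (φ t) volume (1/2) t :=
      it.mono_set (by rw [uIcc_of_le ht.le, uIcc_of_le ht0.le]; apply Icc_subset_Icc <;> linarith)
    have s1 := integral_add_adjacent_intervals (i1a.trans i1b) i1c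
    have s2 := integral_add_adjacent_intervals i1a i1b
    have s3 := integral_add_adjacent_intervals ita itb
    have hk : ∀ s, 0 ≤ s → s < t →
        (1 - a) * (s * (1 - t)) ≤ (1 - s / t) ^ (a - 1) - (1 - s / 1) ^ (a - 1) := by
      intro s hs0 hst
      have hd : s ≤ s / t := by rw [le_div_iff₀ ht0]; nlinarith
      have h := kernel_incr a s (s / t) ha1 hs0 hd (by rwa [div_lt_one ht0])
      rw [div_one]
      refine le_trans ?_ h
      have : s * (1 - t) ≤ s / t - s := by
        have : s / t - s = s / t * (1 - t) := by field_simp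
        rw [this]
        exact mul_le_mul_of_nonneg_right hd (by linarith)
      exact mul_le_mul_of_nonneg_left this (by linarith)
    have b1 : (∫ s in (0:ℝ)..(1/2), φ 1 s) + (1 - t) * c ≤ ∫ s in (0:ℝ)..(1/2), φ t s := by
      rw [hc, ← intervalIntegral.integral_const_mul,
        ← intervalIntegral.integral_add i1a ((hψc.intervalIntegrable _ _).const_mul _)]
      refine intervalIntegral.integral_mono_on_of_le_Ioo (by norm_num)
        (i1a.add ((hψc.intervalIntegrable _ _).const_mul _)) ita ?_
      intro s hs
      have hs0 : 0 < s := hs.1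
      have hgs := hgpos s hs0.le (by linarith [hs.2])
      have h := hk s hs0.le (by linarith [hs.2])
      have e : s ^ a = s ^ (a - 1) * s := by
        rw [Real.rpow_sub_one hs0.ne', div_mul_cancel₀ _ hs0.ne']
      simp only [φ, ψ]
      rw [e]
      have hw : 0 < s ^ (a - 1) * g s := by positivity
      have := mul_le_mul_of_nonneg_left h hw.le
      linarith
    have b2 : (∫ s in (1/2)..t, φ 1 s) ≤ ∫ s in (1/2)..t, φ t s := by
      refine intervalIntegral.integral_mono_on_of_le_Ioo ht.le i1b itb ?_
      intro s hs
      have hs0 : 0 < s := by linarith [hs.1]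
      have hgs := hgpos s hs0.le (by linarith [hs.2])
      have h := hk s hs0.le hs.2
      have h' : 0 ≤ (1 - a) * (s * (1 - t)) :=
        mul_nonneg (by linarith) (mul_nonneg hs0.le (by linarith))
      have h6 : (1 - s / 1) ^ (a - 1) ≤ (1 - s / t) ^ (a - 1) := by linarith
      simp only [φ]
      exact mul_le_mul_of_nonneg_right (mul_le_mul_of_nonneg_left h6 (by positivity)) hgs.le
    have b3 : (∫ s in t..1, φ 1 s) ≤ ∫ s in t..1, 2 * C * (1 - t) ^ a := by
      refine intervalIntegral.integral_mono_on_of_le_Ioo ht1.le i1c (by simp) ?_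
      intro s hs
      have hs0 : 0 < s := by linarith [hs.1]
      have hs1 : 0 < 1 - s := by linarith [hs.2]
      have hgs := hgpos s hs0.le hs.2
      have hw : s ^ (a - 1) ≤ 2 := by
        calc s ^ (a - 1) ≤ s ^ (-1 : ℝ) :=
              Real.rpow_le_rpow_of_exponent_ge hs0 hs.2.le (by linarith)
          _ = s⁻¹ := Real.rpow_neg_one s
          _ ≤ 2 := by rw [inv_le_comm₀ hs0 two_pos]; linarith [hs.1]
      have e : (1 - s) ^ a = (1 - s) ^ (a - 1) * (1 - s) := by
        rw [Real.rpow_sub_one hs1.ne', div_mul_cancel₀ _ hs1.ne']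
      simp only [φ, div_one]
      calc s ^ (a - 1) * (1 - s) ^ (a - 1) * g s
          ≤ 2 * (1 - s) ^ (a - 1) * (C * (1 - s)) := by
            gcongr
            exact hgup s hs0.le hs.2.le
        _ = 2 * C * (1 - s) ^ a := by rw [e]; ring
        _ ≤ 2 * C * (1 - t) ^ a := by
            have : (1 - s) ^ a ≤ (1 - t) ^ a :=
              Real.rpow_le_rpow hs1.le (by linarith [hs.1]) ha.le
            gcongr
    rw [intervalIntegral.integral_const, smul_eq_mul] at b3
    have := hIt t ht0 ht1
    have h5 : (1 - t) * c ≤ (1 - t) * (2 * C * (1 - t) ^ a) := by linarith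
    exact le_of_mul_le_mul_left h5 (by linarith)
  have hlim : Filter.Tendsto (fun t : ℝ => 2 * C * (1 - t) ^ a) (nhdsWithin 1 (Iio 1)) (nhds 0) := by
    have hcont : Continuous (fun t : ℝ => 2 * C * (1 - t) ^ a) :=
      continuous_const.mul ((Real.continuous_rpow_const ha.le).comp (continuous_const.sub continuous_id))
    have := (hcont.tendsto 1).mono_left (nhdsWithin_le_nhds (s := Iio 1))
    simpa [Real.zero_rpow ha.ne'] using this
  have hle : c ≤ 0 := by
    refine ge_of_tendsto hlim ?_
    filter_upwards [Ioo_mem_nhdsLT (show (1/2 : ℝ) < 1 by norm_num)] with t ht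
    exact hmain t ht.1 ht.2
  linarith

/-- For `α ∈ (0,1)`, the Mittag-Leffler function `E_{α,α}` is strictly positive on
all of `ℝ` (in particular at negative arguments). -/
theorem mittagLeffler_pos (α : ℝ) (hα : α ∈ Set.Ioo (0 : ℝ) 1) (x : ℝ) :
    0 < mittagLeffler α α x := by
  obtain ⟨ha, ha1⟩ := hα
  have hG : ∀ k : ℕ, 0 < Real.Gamma (α * k + α) := fun k => Real.Gamma_pos_of_pos (by positivity)
  have hnn : ∀ y : ℝ, 0 ≤ y → 0 < mittagLeffler α α y := by
    intro y hy
    exact (ml_summable_s16 α α y ha ha).tsum_pos (fun k => by have := hG k; positivity) 0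
      (by have := hG 0; positivity)
  by_contra hcon
  have hx0 : x < 0 := by
    by_contra h
    exact hcon (hnn x (not_lt.1 h))
  let S : Set ℝ := {y | 0 ≤ y ∧ mittagLeffler α α (-y) ≤ 0}
  have hSc : IsClosed S :=
    (isClosed_le continuous_const continuous_id).inter
      (isClosed_le ((ml_continuous α α ha ha).comp continuous_neg) continuous_const)
  have hSne : S.Nonempty := ⟨-x, by linarith, by simpa using hcon⟩
  have hSb : BddBelow S := ⟨0, fun y hy => hy.1⟩
  have hmem := hSc.csInf_mem hSne hSb
  have hl : 0 < sInf S := by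
    refine lt_of_le_of_ne hmem.1 fun h => ?_
    have h1 := hmem.2
    rw [← h, neg_zero] at h1
    exact absurd (hnn 0 le_rfl) (not_lt.2 h1)
  refine no_first_zero α (sInf S) ha ha1 hl hmem.2 ?_
  intro y hy hyl
  by_contra h
  exact absurd (csInf_le hSb (show y ∈ S from ⟨hy, not_lt.1 h⟩)) (not_le.2 hyl)
end
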